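/- arXiv:1112.4346 — 2 statements merged into one kernel-verified Lean document; each statement's English description precedes it below -/
import Mathlib

section
/- Let p ∈ (1, ∞) and let ψ : ℝ → ℂ be a Schwartz function with ψ̂(0) = 0, where ψ̂(ξ) := ∫_ℝ ψ(t) e^{−itξ} dt. For k ∈ ℕ (k ≥ 1) set ψ_k := 2^k ψ(2^k ·). Then there exists a constant C = C(p, ψ) > 0 such that for every measurable function f : ℝ → ℂ with ‖f‖_{S^p} < ∞, ‖(Σ_{k=1}^∞ |f ∗ ψ_k|²)^{1/2}‖_{S^p} ≤ C ‖f‖_{S^p}, where (f ∗ ψ_k)(x) := ∫_ℝ f(x − y) ψ_k(y) dy. -/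
open MeasureTheory

/-- The Stepanov `S^p` "norm" of `f : ℝ → ℂ`, valued in `ℝ≥0∞`:
`‖f‖_{S^p} = (sup_{x ∈ ℝ} ∫_x^{x+1} |f(s)|^p ds)^{1/p}`. -/
noncomputable def stepanov (p : ℝ) (f : ℝ → ℂ) : ENNReal :=
  (⨆ x : ℝ, ∫⁻ s in Set.Ioc x (x + 1), (‖f s‖₊ : ENNReal) ^ p) ^ (1 / p)


lemma cz_decomp (f : ℝ → ℂ) (hf : Integrable f) (lam : ℝ) (hlam : 0 < lam) :
    ∃ (ι : Type) (_ : Countable ι) (a l : ι → ℝ), (∀ i, 0 < l i) ∧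
      Pairwise (fun i j => Disjoint (Set.Ico (a i) (a i + l i)) (Set.Ico (a j) (a j + l j))) ∧
      (∀ i, lam * l i < ∫ y in Set.Ico (a i) (a i + l i), ‖f y‖) ∧
      (∀ i, ∫ y in Set.Ico (a i) (a i + l i), ‖f y‖ ≤ 2 * lam * l i) ∧
      ∀ᵐ x : ℝ, (x ∉ ⋃ i, Set.Ico (a i) (a i + l i)) → ‖f x‖ ≤ lam := by
  set L : ℝ := (∫ y, ‖f y‖) / lam + 1 with hL
  have hI0 : 0 ≤ ∫ y, ‖f y‖ := integral_nonneg fun _ => norm_nonneg _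
  have hLpos : 0 < L := by positivity
  set h : ℕ → ℝ := fun n => L / 2 ^ n with hh
  have hpos : ∀ n, 0 < h n := fun n => by simp only [hh]; positivity
  set J : ℕ → ℤ → Set ℝ := fun n j => Set.Ico (j * h n) (j * h n + h n) with hJ
  have memJ : ∀ n j x, x ∈ J n j ↔ ⌊x / h n⌋ = j := by
    intro n j x
    rw [Int.floor_eq_iff, le_div_iff₀ (hpos n), div_lt_iff₀ (hpos n)]
    simp only [hJ, Set.mem_Ico]
    constructor <;> rintro ⟨h1, h2⟩ <;> constructor <;> linarith
  have anc : ∀ (n m : ℕ) (x : ℝ), m ≤ n → ⌊x / h m⌋ = ⌊x / h n⌋ / 2 ^ (n - m) := by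
    intro n m x hmn
    have : x / h m = (x / h n) / ((2 ^ (n - m) : ℕ) : ℝ) := by
      obtain ⟨k, rfl⟩ := Nat.exists_eq_add_of_le hmn
      simp only [hh, Nat.add_sub_cancel_left]
      push_cast
      field_simp
      ring
    rw [this, Int.floor_div_natCast]
    push_cast
    rfl
  set bad : ℕ → ℤ → Prop := fun n j => lam * h n < ∫ y in J n j, ‖f y‖ with hbad
  have bad0 : ∀ j, ¬ bad 0 j := by
    intro j hb
    simp only [hbad] at hb
    have h1 : ∫ y in J 0 j, ‖f y‖ ≤ ∫ y, ‖f y‖ :=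
      setIntegral_le_integral hf.norm (Filter.Eventually.of_forall fun _ => norm_nonneg _)
    have h2 : lam * h 0 = (∫ y, ‖f y‖) + lam := by
      simp only [hh, hL]; field_simp
    linarith
  set S : Set (ℕ × ℤ) := {q | bad q.1 q.2 ∧ ∀ m < q.1, ¬ bad m (q.2 / 2 ^ (q.1 - m))} with hS
  refine ⟨S, inferInstance, fun i => i.1.2 * h i.1.1, fun i => h i.1.1, fun i => hpos _, ?_, ?_, ?_, ?_⟩
  · rintro ⟨⟨n, j⟩, hb, hn⟩ ⟨⟨n', j'⟩, hb', hn'⟩ hne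
    rw [Set.disjoint_left]
    intro x hx hx'
    have e1 := (memJ n j x).1 hx
    have e2 := (memJ n' j' x).1 hx'
    simp only at hb hn hb' hn'
    rcases lt_trichotomy n n' with hlt | heq | hlt
    · apply hn' n hlt
      rw [← e2, ← anc n' n x hlt.le, e1]; exact hb
    · subst heq
      apply hne; simp [← e1, ← e2]
    · apply hn n' hlt
      rw [← e1, ← anc n n' x hlt.le, e2]; exact hb'
  · rintro ⟨⟨n, j⟩, hb, hn⟩
    exact hb
  · rintro ⟨⟨n, j⟩, hb, hn⟩
    simp only at hb hn ⊢
    rcases n with _ | n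
    · exact absurd hb (bad0 j)
    have h1 := hn n (Nat.lt_succ_self n)
    simp only [hbad, not_lt] at h1
    have hsub : J (n+1) j ⊆ J n (j / 2 ^ (n + 1 - n)) := by
      intro x hx
      rw [memJ] at hx ⊢
      rw [anc (n+1) n x (Nat.le_succ n), hx]
    have h2 : ∫ y in J (n+1) j, ‖f y‖ ≤ ∫ y in J n (j / 2 ^ (n + 1 - n)), ‖f y‖ :=
      setIntegral_mono_set hf.norm.integrableOn
        (Filter.Eventually.of_forall fun _ => norm_nonneg _) (Filter.Eventually.of_forall hsub)
    have h3 : h n = 2 * h (n+1) := by simp only [hh]; field_simp; ring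
    rw [h3] at h1
    calc _ ≤ _ := h2
      _ ≤ _ := h1
      _ = _ := by ring
  · have hleb := IsUnifLocDoublingMeasure.ae_tendsto_average (μ := (volume : Measure ℝ))
      hf.norm.locallyIntegrable 1
    filter_upwards [hleb] with x hx hxn
    have nb : ∀ n, ¬ bad n ⌊x / h n⌋ := by
      intro n
      induction n using Nat.strong_induction_on with
      | _ n ih =>
        intro hb
        apply hxn
        rw [Set.mem_iUnion]
        refine ⟨⟨(n, ⌊x / h n⌋), hb, ?_⟩, ?_⟩
        · intro m hm
          simp only at hm ⊢
          rw [← anc n m x hm.le]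
          exact ih m hm
        · exact (memJ n _ x).2 rfl
    have hlim : Filter.Tendsto (fun n => h n / 2) Filter.atTop (nhdsWithin 0 (Set.Ioi 0)) := by
      rw [tendsto_nhdsWithin_iff]
      refine ⟨?_, Filter.Eventually.of_forall fun n => by have := hpos n; simp only [Set.mem_Ioi]; positivity⟩
      have : Filter.Tendsto (fun n : ℕ => (L / 2) * (1/2 : ℝ) ^ n) Filter.atTop (nhds (L / 2 * 0)) :=
        (tendsto_pow_atTop_nhds_zero_of_lt_one (by norm_num) (by norm_num)).const_mul _
      rw [mul_zero] at this
      refine this.congr fun n => ?_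
      simp only [hh, one_div, inv_pow]; field_simp
    have key := hx (fun n => ⌊x / h n⌋ * h n + h n / 2) (fun n => h n / 2) hlim
      (Filter.Eventually.of_forall fun n => by
        have := (memJ n _ x).2 rfl
        simp only [hJ, Set.mem_Ico] at this
        rw [one_mul, Real.closedBall_eq_Icc, Set.mem_Icc]
        constructor <;> linarith [this.1, this.2])
    refine le_of_tendsto key (Filter.Eventually.of_forall fun n => ?_)
    have hb := nb n
    simp only [hbad, not_lt, hJ] at hb
    rw [Real.closedBall_eq_Icc, setAverage_eq]
    have e1 : (⌊x / h n⌋ * h n + h n / 2 - h n / 2 : ℝ) = ⌊x / h n⌋ * h n := by ring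
    have e2 : (⌊x / h n⌋ * h n + h n / 2 + h n / 2 : ℝ) = ⌊x / h n⌋ * h n + h n := by ring
    rw [e1, e2, integral_Icc_eq_integral_Ico]
    have : (volume : Measure ℝ).real (Set.Icc (⌊x / h n⌋ * h n : ℝ) (⌊x / h n⌋ * h n + h n)) = h n := by
      rw [Real.volume_real_Icc_of_le (by linarith [hpos n])]; ring
    rw [this, smul_eq_mul, inv_mul_le_iff₀ (hpos n)]
    linarith


noncomputable def Tz (K : ℝ → ℂ) (f : ℝ → ℂ) (x : ℝ) : ℂ := ∫ y, K (x - y) * f y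

lemma Tz_integrable (K : SchwartzMap ℝ ℂ) {f : ℝ → ℂ} (hf : Integrable f) (x : ℝ) :
    Integrable (fun y => K (x - y) * f y) := by
  obtain ⟨C, hC⟩ := K.decay 0 0
  refine hf.bdd_mul (c := C) (by
    have : Continuous fun y => K (x - y) := K.continuous.comp (by fun_prop)
    exact this.aestronglyMeasurable) (Filter.Eventually.of_forall fun y => ?_)
  simpa using hC.2 (x - y)

lemma cz_bad (K : SchwartzMap ℝ ℂ) (B : ENNReal)
    (hH : ∀ a y r : ℝ, 0 < r → |y - a| ≤ r →
      ∫⁻ x in {x | 2 * r < |x - a|}, ‖K (x - y) - K (x - a)‖ₑ ≤ B)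
    (b : ℝ → ℂ) (hbm : Measurable b) (hb : Integrable b)
    {ι : Type} [Countable ι] (a l : ι → ℝ) (hl : ∀ i, 0 < l i)
    (hd : Pairwise (fun i j => Disjoint (Set.Ico (a i) (a i + l i)) (Set.Ico (a j) (a j + l j))))
    (hb0 : ∀ x, (x ∉ ⋃ i, Set.Ico (a i) (a i + l i)) → b x = 0)
    (hmean : ∀ i, ∫ y in Set.Ico (a i) (a i + l i), b y = 0) :
    ∫⁻ x in {x | ∀ i, 2 * l i < |x - a i|}, ‖Tz K b x‖ₑ ≤
      B * ∑' i, ∫⁻ y in Set.Ico (a i) (a i + l i), ‖b y‖ₑ := by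
  have hKc : Continuous K := K.continuous
  have step1 : ∀ x, ‖Tz K b x‖ₑ ≤
      ∑' i, ∫⁻ y in Set.Ico (a i) (a i + l i), ‖K (x - y) - K (x - a i)‖ₑ * ‖b y‖ₑ := by
    intro x
    have hint := Tz_integrable K hb x
    have e1 : Tz K b x = ∫ y in ⋃ i, Set.Ico (a i) (a i + l i), K (x - y) * b y := by
      rw [Tz]
      symm
      apply setIntegral_eq_integral_of_forall_compl_eq_zero
      intro y hy
      rw [hb0 y hy, mul_zero]
    rw [e1, integral_iUnion (fun i => measurableSet_Ico) hd hint.integrableOn]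
    refine enorm_tsum_le_tsum_enorm.trans ?_
    refine ENNReal.tsum_le_tsum fun i => ?_
    have e2 : ∫ y in Set.Ico (a i) (a i + l i), K (x - y) * b y =
        ∫ y in Set.Ico (a i) (a i + l i), (K (x - y) - K (x - a i)) * b y := by
      simp_rw [sub_mul]
      rw [integral_sub hint.integrableOn (hb.const_mul _).integrableOn, integral_const_mul, hmean i]
      simp
    rw [e2]
    refine (enorm_integral_le_lintegral_enorm _).trans (le_of_eq ?_)
    simp_rw [enorm_mul]
  have hmeas : ∀ i, Measurable (fun z : ℝ × ℝ => ‖K (z.1 - z.2) - K (z.1 - a i)‖ₑ * ‖b z.2‖ₑ) := by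
    intro i
    have h1 : Continuous fun z : ℝ × ℝ => K (z.1 - z.2) - K (z.1 - a i) := by fun_prop
    exact h1.measurable.enorm.mul (hbm.comp measurable_snd).enorm
  calc _ ≤ ∫⁻ x in {x | ∀ i, 2 * l i < |x - a i|},
        ∑' i, ∫⁻ y in Set.Ico (a i) (a i + l i), ‖K (x - y) - K (x - a i)‖ₑ * ‖b y‖ₑ :=
        lintegral_mono fun x => step1 x
    _ = ∑' i, ∫⁻ x in {x | ∀ i, 2 * l i < |x - a i|},
          ∫⁻ y in Set.Ico (a i) (a i + l i), ‖K (x - y) - K (x - a i)‖ₑ * ‖b y‖ₑ := by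
        apply lintegral_tsum
        intro i
        exact (Measurable.lintegral_prod_right' (hmeas i)).aemeasurable
    _ ≤ ∑' i, ∫⁻ x in {x | 2 * l i < |x - a i|},
          ∫⁻ y in Set.Ico (a i) (a i + l i), ‖K (x - y) - K (x - a i)‖ₑ * ‖b y‖ₑ := by
        refine ENNReal.tsum_le_tsum fun i => ?_
        exact lintegral_mono_set fun x hx => hx i
    _ = ∑' i, ∫⁻ y in Set.Ico (a i) (a i + l i), ∫⁻ x in {x | 2 * l i < |x - a i|},
          ‖K (x - y) - K (x - a i)‖ₑ * ‖b y‖ₑ := by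
        congr 1; ext i
        exact lintegral_lintegral_swap (hmeas i).aemeasurable
    _ ≤ ∑' i, ∫⁻ y in Set.Ico (a i) (a i + l i), B * ‖b y‖ₑ := by
        refine ENNReal.tsum_le_tsum fun i => ?_
        refine setLIntegral_mono (hbm.enorm.const_mul B) fun y hy => ?_
        rw [lintegral_mul_const']
        · gcongr
          refine hH (a i) y (l i) (hl i) ?_
          rw [abs_le]; constructor <;> linarith [hy.1, hy.2, hl i]
        · simp
    _ = _ := by
        rw [← ENNReal.tsum_mul_left]
        congr 1; ext i
        rw [lintegral_const_mul _ hbm.enorm]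

lemma cz_weak (K : SchwartzMap ℝ ℂ) (A B : ENNReal)
    (hL2 : ∀ g : ℝ → ℂ, Measurable g → MemLp g 2 → 
      ∫⁻ x, ‖Tz K g x‖ₑ ^ 2 ≤ A * ∫⁻ x, ‖g x‖ₑ ^ 2)
    (hH : ∀ a y r : ℝ, 0 < r → |y - a| ≤ r →
      ∫⁻ x in {x | 2 * r < |x - a|}, ‖K (x - y) - K (x - a)‖ₑ ≤ B)
    (f : ℝ → ℂ) (hfm : Measurable f) (hf : Integrable f) (lam : ℝ) (hlam : 0 < lam) :
    volume {x | 2 * lam < ‖Tz K f x‖} ≤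
      A * ((ENNReal.ofReal lam)⁻¹ ^ 2 * ∫⁻ x in {x | ‖f x‖ ≤ lam}, ‖f x‖ₑ ^ 2) + 
      (4 * A + 4 + 4 * B) * (2 * ((ENNReal.ofReal lam)⁻¹ * ∫⁻ x in {x | lam < 2 * ‖f x‖}, ‖f x‖ₑ)) := by
  obtain ⟨ι, hι, a, l, hl, hd, hlow, hup, hae⟩ := cz_decomp f hf lam hlam
  set Q : ι → Set ℝ := fun i => Set.Ico (a i) (a i + l i) with hQ
  set Ω : Set ℝ := ⋃ i, Q i with hΩ
  have hQm : ∀ i, MeasurableSet (Q i) := fun i => measurableSet_Ico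
  have hΩm : MeasurableSet Ω := MeasurableSet.iUnion hQm
  have hvQ : ∀ i, volume (Q i) = ENNReal.ofReal (l i) := by
    intro i; simp only [hQ, Real.volume_Ico]; congr 1; ring
  have hvΩ : volume Ω = ∑' i, ENNReal.ofReal (l i) := by
    rw [hΩ, measure_iUnion hd hQm]; exact tsum_congr hvQ
  set Λ := ENNReal.ofReal lam with hΛ
  have hΛ0 : Λ ≠ 0 := by simp [hΛ, hlam]
  have hΛt : Λ ≠ ⊤ := by simp [hΛ]
  have hQf : ∀ i, ∫⁻ y in Q i, ‖f y‖ₑ = ENNReal.ofReal (∫ y in Q i, ‖f y‖) := by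
    intro i
    rw [ofReal_integral_norm_eq_lintegral_enorm hf.integrableOn]
  -- volume of Ω
  have hΩbd : volume Ω ≤ 2 * (Λ⁻¹ * ∫⁻ x in {x | lam < 2 * ‖f x‖}, ‖f x‖ₑ) := by
    have hEm : MeasurableSet {x | lam < 2 * ‖f x‖} :=
      measurableSet_lt measurable_const (hfm.norm.const_mul 2)
    have h1 : ∀ i, ENNReal.ofReal (l i) ≤ 2 * (Λ⁻¹ * ∫⁻ x in Q i, 
        {x | lam < 2 * ‖f x‖}.indicator (fun x => ‖f x‖ₑ) x) := by
      intro i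
      have hpt : ∀ x, ‖f x‖ₑ ≤ {x | lam < 2 * ‖f x‖}.indicator (fun x => ‖f x‖ₑ) x + Λ / 2 := by
        intro x
        by_cases hx : lam < 2 * ‖f x‖
        · rw [Set.indicator_of_mem (by exact hx)]; exact le_self_add
        · refine le_add_left ?_
          rw [← ofReal_norm, hΛ, show (2 : ENNReal) = ENNReal.ofReal 2 by simp,
            ← ENNReal.ofReal_div_of_pos (by norm_num)]
          apply ENNReal.ofReal_le_ofReal; linarith
      have h2 : Λ * ENNReal.ofReal (l i) ≤ (∫⁻ x in Q i, 
        {x | lam < 2 * ‖f x‖}.indicator (fun x => ‖f x‖ₑ) x) + Λ / 2 * ENNReal.ofReal (l i) := by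
        calc Λ * ENNReal.ofReal (l i) = ENNReal.ofReal (lam * l i) := by
              rw [ENNReal.ofReal_mul hlam.le]
          _ ≤ ∫⁻ y in Q i, ‖f y‖ₑ := by
              rw [hQf]; exact ENNReal.ofReal_le_ofReal (hlow i).le
          _ ≤ ∫⁻ x in Q i, ({x | lam < 2 * ‖f x‖}.indicator (fun x => ‖f x‖ₑ) x + Λ / 2) :=
              lintegral_mono fun x => hpt x
          _ = _ := by
              rw [lintegral_add_right _ measurable_const, setLIntegral_const, hvQ]
      have h3 : Λ * ENNReal.ofReal (l i) = Λ / 2 * ENNReal.ofReal (l i) + Λ / 2 * ENNReal.ofReal (l i) := by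
        rw [← add_mul, ENNReal.add_halves]
      rw [h3] at h2
      have h4 := (ENNReal.add_le_add_iff_right (ENNReal.mul_ne_top (ENNReal.div_ne_top hΛt (by simp)) ENNReal.ofReal_ne_top)).1 h2
      calc ENNReal.ofReal (l i) = 2 * (Λ⁻¹ * (Λ / 2 * ENNReal.ofReal (l i))) := by
            rw [div_eq_mul_inv]
            calc _ = (2 * 2⁻¹) * (Λ⁻¹ * Λ) * ENNReal.ofReal (l i) := by
                  rw [ENNReal.mul_inv_cancel (by simp) (by simp), ENNReal.inv_mul_cancel hΛ0 hΛt]; simp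
              _ = _ := by ring
        _ ≤ _ := by gcongr
    rw [hvΩ]
    refine (ENNReal.tsum_le_tsum h1).trans ?_
    rw [ENNReal.tsum_mul_left, ENNReal.tsum_mul_left, ← lintegral_iUnion hQm hd]
    refine mul_le_mul_right (mul_le_mul_right ?_ _) _
    rw [← lintegral_indicator hEm]
    exact setLIntegral_le_lintegral _ _
  have hΩfin : volume Ω ≠ ⊤ := by
    refine ne_top_of_le_ne_top ?_ hΩbd
    have : ∫⁻ x in {x | lam < 2 * ‖f x‖}, ‖f x‖ₑ ≠ ⊤ :=
      ne_top_of_le_ne_top hf.2.ne (setLIntegral_le_lintegral _ _)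
    exact ENNReal.mul_ne_top (by simp) (ENNReal.mul_ne_top (ENNReal.inv_ne_top.2 hΛ0) this)
  -- good function
  set av : ι → ℂ := fun i => ((l i)⁻¹ : ℝ) • ∫ y in Q i, f y with hav
  have havn : ∀ i, ‖av i‖ ≤ 2 * lam := by
    intro i
    rw [hav]; simp only
    rw [norm_smul, Real.norm_of_nonneg (inv_nonneg.2 (hl i).le), inv_mul_le_iff₀ (hl i)]
    refine (norm_integral_le_integral_norm _).trans ((hup i).trans (le_of_eq (by ring)))
  obtain ⟨g, hgm, hg⟩ := exists_measurable_piecewise (ι := Option ι)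
    (fun o => o.elim Ωᶜ Q) (by rintro (_ | i); exacts [hΩm.compl, hQm i])
    (fun o => o.elim f (fun i _ => av i)) (by rintro (_ | i); exacts [hfm, measurable_const])
    (by
      rintro (_ | i) (_ | j) hij x hx
      · rfl
      · exact absurd (Set.mem_iUnion.2 ⟨j, hx.2⟩) hx.1
      · exact absurd (Set.mem_iUnion.2 ⟨i, hx.1⟩) hx.2
      · have hij' : i ≠ j := fun h => hij (by rw [h])
        exact absurd hx.2 (Set.disjoint_left.1 (hd hij') hx.1))
  have hg0 : ∀ x, x ∉ Ω → g x = f x := fun x hx => hg none hx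
  have hg1 : ∀ i, ∀ x ∈ Q i, g x = av i := fun i x hx => hg (some i) hx
  have hgΩ : ∀ x ∈ Ω, ‖g x‖ ≤ 2 * lam := by
    intro x hx
    obtain ⟨i, hi⟩ := Set.mem_iUnion.1 hx
    rw [hg1 i x hi]; exact havn i
  have hgΩe : ∀ x ∈ Ω, ‖g x‖ₑ ≤ 2 * Λ := by
    intro x hx
    rw [← ofReal_norm, hΛ, show (2 : ENNReal) = ENNReal.ofReal 2 by simp,
      ← ENNReal.ofReal_mul (by norm_num)]
    exact ENNReal.ofReal_le_ofReal (hgΩ x hx)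
  have hgint : Integrable g := by
    refine ⟨hgm.aestronglyMeasurable, ?_⟩
    rw [HasFiniteIntegral, ← lintegral_add_compl _ hΩm]
    refine ENNReal.add_lt_top.2 ⟨?_, ?_⟩
    · calc ∫⁻ x in Ω, ‖g x‖ₑ ≤ ∫⁻ x in Ω, 2 * Λ := setLIntegral_mono measurable_const hgΩe
        _ = 2 * Λ * volume Ω := by rw [setLIntegral_const]
        _ < ⊤ := ENNReal.mul_lt_top (ENNReal.mul_lt_top (by simp) hΛt.lt_top) hΩfin.lt_top
    · calc ∫⁻ x in Ωᶜ, ‖g x‖ₑ = ∫⁻ x in Ωᶜ, ‖f x‖ₑ := 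
          setLIntegral_congr_fun hΩm.compl fun x hx => by simp only [hg0 x hx]
        _ ≤ ∫⁻ x, ‖f x‖ₑ := setLIntegral_le_lintegral _ _
        _ < ⊤ := hf.2
  have hEm2 : MeasurableSet {x | ‖f x‖ ≤ lam} := measurableSet_le hfm.norm measurable_const
  have hg2 : ∫⁻ x, ‖g x‖ₑ ^ 2 ≤ (∫⁻ x in {x | ‖f x‖ ≤ lam}, ‖f x‖ₑ ^ 2) + 4 * Λ ^ 2 * volume Ω := by
    rw [← lintegral_add_compl _ hΩm, add_comm]
    gcongr ?_ + ?_
    · calc ∫⁻ x in Ωᶜ, ‖g x‖ₑ ^ 2 = ∫⁻ x in Ωᶜ, ‖f x‖ₑ ^ 2 :=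
          setLIntegral_congr_fun hΩm.compl fun x hx => by simp only [hg0 x hx]
        _ ≤ _ := by
          refine lintegral_mono_set' ?_
          filter_upwards [hae] with x hx hx2 using hx hx2
    · calc ∫⁻ x in Ω, ‖g x‖ₑ ^ 2 ≤ ∫⁻ x in Ω, (2 * Λ) ^ 2 := 
          setLIntegral_mono measurable_const fun x hx => by gcongr; exact hgΩe x hx
        _ = _ := by rw [setLIntegral_const]; ring
  have hgL2 : MemLp g 2 := by
    refine ⟨hgm.aestronglyMeasurable, ?_⟩
    rw [eLpNorm_lt_top_iff_lintegral_rpow_enorm_lt_top (by simp) (by simp)]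
    simp only [ENNReal.toReal_ofNat, ENNReal.rpow_ofNat]
    refine lt_of_le_of_lt hg2 ?_
    have h1 : ∫⁻ x in {x | ‖f x‖ ≤ lam}, ‖f x‖ₑ ^ 2 ≤ Λ * ∫⁻ x, ‖f x‖ₑ := by
      rw [← lintegral_const_mul _ hfm.enorm]
      refine (setLIntegral_mono (hfm.enorm.const_mul Λ) fun x hx => ?_).trans
        (setLIntegral_le_lintegral _ _)
      rw [sq]; gcongr
      rw [← ofReal_norm]; exact ENNReal.ofReal_le_ofReal hx
    have h2 : ∫⁻ x, ‖f x‖ₑ < ⊤ := hf.2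
    have h3 := lt_of_le_of_lt h1 (ENNReal.mul_lt_top hΛt.lt_top h2)
    exact ENNReal.add_lt_top.2 ⟨h3, ENNReal.mul_lt_top (ENNReal.mul_lt_top (by simp) 
      (ENNReal.pow_lt_top hΛt.lt_top)) hΩfin.lt_top⟩
  -- bad function
  set b : ℝ → ℂ := fun x => f x - g x with hb
  have hbint : Integrable b := hf.sub hgint
  have hbm : Measurable b := hfm.sub hgm
  have hbad := cz_bad K B hH b hbm hbint a l hl hd (fun x hx => by simp [hb, hg0 x hx])
    (fun i => by
      have hlv : (volume : Measure ℝ).real (Q i) = l i := by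
        simp [Measure.real, hvQ, (hl i).le]
      show ∫ y in Q i, (f y - g y) = 0
      rw [integral_sub hf.integrableOn hgint.integrableOn]
      rw [setIntegral_congr_fun (hQm i) (hg1 i), setIntegral_const, hlv, hav]
      simp only
      rw [smul_smul, mul_inv_cancel₀ (hl i).ne', one_smul, sub_self])
  have hbQ : ∑' i, ∫⁻ y in Q i, ‖b y‖ₑ ≤ 4 * Λ * volume Ω := by
    rw [hvΩ, ← ENNReal.tsum_mul_left]
    refine ENNReal.tsum_le_tsum fun i => ?_
    calc ∫⁻ y in Q i, ‖b y‖ₑ ≤ ∫⁻ y in Q i, (‖f y‖ₑ + 2 * Λ) := by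
          refine setLIntegral_mono (by fun_prop) fun y hy => ?_
          exact enorm_sub_le.trans (by gcongr; exact hgΩe y (Set.mem_iUnion.2 ⟨i, hy⟩))
      _ = ENNReal.ofReal (∫ y in Q i, ‖f y‖) + 2 * Λ * ENNReal.ofReal (l i) := by
          rw [lintegral_add_right _ measurable_const, setLIntegral_const, hvQ, hQf]
      _ ≤ ENNReal.ofReal (2 * lam * l i) + 2 * Λ * ENNReal.ofReal (l i) := by
          gcongr; exact hup i
      _ = _ := by
          rw [ENNReal.ofReal_mul (by positivity), ENNReal.ofReal_mul (by norm_num)]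
          simp only [ENNReal.ofReal_ofNat]
          rw [← hΛ, ← add_mul, ← add_mul]; norm_num
  have hsplit : ∀ x, Tz K f x = Tz K g x + Tz K b x := by
    intro x
    rw [Tz, Tz, Tz, ← integral_add (Tz_integrable K hgint x) (Tz_integrable K hbint x)]
    congr 1; ext y; simp only [hb]; ring
  have hcover : {x | 2 * lam < ‖Tz K f x‖} ⊆ {x | Λ ^ 2 ≤ ‖Tz K g x‖ₑ ^ 2} ∪ 
      ((⋃ i, Set.Icc (a i - 2 * l i) (a i + 2 * l i)) ∪ 
       {x | Λ ≤ {x | ∀ i, 2 * l i < |x - a i|}.indicator (fun x => ‖Tz K b x‖ₑ) x}) := by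
    intro x hx
    by_cases h1 : x ∈ ⋃ i, Set.Icc (a i - 2 * l i) (a i + 2 * l i)
    · exact Or.inr (Or.inl h1)
    have h2 : x ∈ {x | ∀ i, 2 * l i < |x - a i|} := by
      intro i
      by_contra hc
      apply h1
      rw [not_lt, abs_le] at hc
      exact Set.mem_iUnion.2 ⟨i, by constructor <;> linarith [hc.1, hc.2]⟩
    by_cases h3 : lam ≤ ‖Tz K g x‖
    · left
      simp only [Set.mem_setOf_eq]
      gcongr
      rw [← ofReal_norm]; exact ENNReal.ofReal_le_ofReal h3
    · right; right
      simp only [Set.mem_setOf_eq] at hx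
      rw [Set.mem_setOf_eq, Set.indicator_of_mem h2, ← ofReal_norm]
      refine ENNReal.ofReal_le_ofReal ?_
      rw [hsplit] at hx
      have := norm_add_le (Tz K g x) (Tz K b x)
      linarith
  have hTm : ∀ u : ℝ → ℂ, Measurable u → Measurable (Tz K u) := by
    intro u hu
    have : StronglyMeasurable (fun z : ℝ × ℝ => K (z.1 - z.2) * u z.2) := by
      have h1 : Continuous fun z : ℝ × ℝ => K (z.1 - z.2) := K.continuous.comp (by fun_prop)
      exact (h1.measurable.mul (hu.comp measurable_snd)).stronglyMeasurable
    exact this.integral_prod_right'.measurable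
  have hSm : MeasurableSet {x | ∀ i, 2 * l i < |x - a i|} := by
    rw [Set.setOf_forall]
    exact MeasurableSet.iInter fun i => measurableSet_lt measurable_const (by fun_prop)
  have m1 : volume {x | Λ ^ 2 ≤ ‖Tz K g x‖ₑ ^ 2} ≤ 
      A * (Λ⁻¹ ^ 2 * ∫⁻ x in {x | ‖f x‖ ≤ lam}, ‖f x‖ₑ ^ 2) + 4 * A * volume Ω := by
    have h1 := mul_meas_ge_le_lintegral₀ (μ := volume) ((hTm g hgm).enorm.pow_const 2).aemeasurable (Λ ^ 2)
    have h2 := h1.trans ((hL2 g hgm hgL2).trans (mul_le_mul_right hg2 A))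
    have hc : Λ⁻¹ ^ 2 * Λ ^ 2 = 1 := by 
      rw [← mul_pow, ENNReal.inv_mul_cancel hΛ0 hΛt, one_pow]
    calc volume {x | Λ ^ 2 ≤ ‖Tz K g x‖ₑ ^ 2} = Λ⁻¹ ^ 2 * (Λ ^ 2 * volume {x | Λ ^ 2 ≤ ‖Tz K g x‖ₑ ^ 2}) := by
          rw [← mul_assoc, hc, one_mul]
      _ ≤ Λ⁻¹ ^ 2 * (A * ((∫⁻ x in {x | ‖f x‖ ≤ lam}, ‖f x‖ₑ ^ 2) + 4 * Λ ^ 2 * volume Ω)) := by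
          gcongr
      _ = A * (Λ⁻¹ ^ 2 * ∫⁻ x in {x | ‖f x‖ ≤ lam}, ‖f x‖ₑ ^ 2) + 4 * A * (Λ⁻¹ ^ 2 * Λ ^ 2) * volume Ω := by ring
      _ = _ := by rw [hc, mul_one]
  have m2 : volume (⋃ i, Set.Icc (a i - 2 * l i) (a i + 2 * l i)) ≤ 4 * volume Ω := by
    refine (measure_iUnion_le _).trans ?_
    rw [hvΩ, ← ENNReal.tsum_mul_left]
    refine ENNReal.tsum_le_tsum fun i => ?_
    rw [Real.volume_Icc, show (4 : ENNReal) = ENNReal.ofReal 4 by simp, ← ENNReal.ofReal_mul (by norm_num)]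
    exact ENNReal.ofReal_le_ofReal (by linarith)
  have m3 : volume {x | Λ ≤ {x | ∀ i, 2 * l i < |x - a i|}.indicator (fun x => ‖Tz K b x‖ₑ) x} ≤ 
      4 * B * volume Ω := by
    have h1 := mul_meas_ge_le_lintegral₀ (μ := volume) ((hTm b hbm).enorm.indicator hSm).aemeasurable Λ
    rw [lintegral_indicator hSm] at h1
    have h2 := h1.trans (hbad.trans (mul_le_mul_right hbQ B))
    have hc : Λ⁻¹ * Λ = 1 := ENNReal.inv_mul_cancel hΛ0 hΛt
    calc _ = Λ⁻¹ * (Λ * _) := by rw [← mul_assoc, hc, one_mul]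
      _ ≤ Λ⁻¹ * (B * (4 * Λ * volume Ω)) := by gcongr
      _ = 4 * B * (Λ⁻¹ * Λ) * volume Ω := by ring
      _ = _ := by rw [hc, mul_one]
  calc volume {x | 2 * lam < ‖Tz K f x‖} ≤ _ := measure_mono hcover
    _ ≤ _ + (_ + _) := (measure_union_le _ _).trans (by gcongr; exact measure_union_le _ _)
    _ ≤ (A * (Λ⁻¹ ^ 2 * ∫⁻ x in {x | ‖f x‖ ≤ lam}, ‖f x‖ₑ ^ 2) + 4 * A * volume Ω) + 
        (4 * volume Ω + 4 * B * volume Ω) := by gcongr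
    _ = A * (Λ⁻¹ ^ 2 * ∫⁻ x in {x | ‖f x‖ ≤ lam}, ‖f x‖ₑ ^ 2) + (4 * A + 4 + 4 * B) * volume Ω := by ring
    _ ≤ _ := by gcongr


lemma Tz_measurable (K : SchwartzMap ℝ ℂ) {u : ℝ → ℂ} (hu : Measurable u) : Measurable (Tz K u) := by
  have : StronglyMeasurable (fun z : ℝ × ℝ => K (z.1 - z.2) * u z.2) := by
    have h1 : Continuous fun z : ℝ × ℝ => K (z.1 - z.2) := K.continuous.comp (by fun_prop)
    exact (h1.measurable.mul (hu.comp measurable_snd)).stronglyMeasurable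
  exact this.integral_prod_right'.measurable

lemma inner1 (p : ℝ) (hp2 : p < 2) (z : ℂ) :
    ‖z‖ₑ ^ 2 * ∫⁻ t in Set.Ioi (0:ℝ), {t : ℝ | ‖z‖ ≤ t}.indicator (fun t => ENNReal.ofReal (t ^ (p - 3))) t
      ≤ ENNReal.ofReal (1 / (2 - p)) * ‖z‖ₑ ^ p := by
  rcases eq_or_ne z 0 with rfl | hz
  · simp
  have hc : 0 < ‖z‖ := norm_pos_iff.2 hz
  have hm : MeasurableSet {t : ℝ | ‖z‖ ≤ t} := measurableSet_Ici
  rw [lintegral_indicator hm, Measure.restrict_restrict hm]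
  have hs : {t : ℝ | ‖z‖ ≤ t} ∩ Set.Ioi 0 = Set.Ici ‖z‖ := by
    ext t; simp only [Set.mem_inter_iff, Set.mem_setOf_eq, Set.mem_Ioi, Set.mem_Ici]
    exact ⟨fun h => h.1, fun h => ⟨h, hc.trans_le h⟩⟩
  rw [hs, ← restrict_Ioi_eq_restrict_Ici, ← ofReal_integral_eq_lintegral_ofReal
    (integrableOn_Ioi_rpow_of_lt (by linarith) hc)
    ((ae_restrict_mem measurableSet_Ioi).mono fun t ht => Real.rpow_nonneg (hc.trans ht).le _),
    integral_Ioi_rpow_of_lt (by linarith) hc]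
  rw [← ofReal_norm, ENNReal.ofReal_rpow_of_pos hc, ← ENNReal.ofReal_pow hc.le,
    ← ENNReal.ofReal_mul (by positivity), ← ENNReal.ofReal_mul (by apply one_div_nonneg.2; linarith)]
  apply ENNReal.ofReal_le_ofReal
  apply le_of_eq
  have : ‖z‖ ^ p = ‖z‖ ^ 2 * ‖z‖ ^ (p - 3 + 1) := by
    rw [← Real.rpow_natCast, ← Real.rpow_add hc]; congr 1; push_cast; ring
  rw [this, show p - 3 + 1 = -(2 - p) by ring]
  have h2 : 2 - p ≠ 0 := by linarith
  field_simp

lemma inner2 (p : ℝ) (hp : 1 < p) (z : ℂ) :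
    ‖z‖ₑ * ∫⁻ t in Set.Ioi (0:ℝ), {t : ℝ | t < 2 * ‖z‖}.indicator (fun t => ENNReal.ofReal (t ^ (p - 2))) t
      ≤ ENNReal.ofReal (2 ^ (p - 1) / (p - 1)) * ‖z‖ₑ ^ p := by
  rcases eq_or_ne z 0 with rfl | hz
  · simp
  have hc : 0 < ‖z‖ := norm_pos_iff.2 hz
  have hm : MeasurableSet {t : ℝ | t < 2 * ‖z‖} := measurableSet_Iio
  rw [lintegral_indicator hm, Measure.restrict_restrict hm]
  have hs : {t : ℝ | t < 2 * ‖z‖} ∩ Set.Ioi 0 = Set.Ioo 0 (2 * ‖z‖) := by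
    ext t; simp only [Set.mem_inter_iff, Set.mem_setOf_eq, Set.mem_Ioi, Set.mem_Ioo]
    exact and_comm
  have hii : IntegrableOn (fun t : ℝ => t ^ (p - 2)) (Set.Ioc 0 (2 * ‖z‖)) := by
    rw [← intervalIntegrable_iff_integrableOn_Ioc_of_le (by positivity)]
    exact intervalIntegral.intervalIntegrable_rpow' (by linarith)
  rw [hs, restrict_Ioo_eq_restrict_Ioc, ← ofReal_integral_eq_lintegral_ofReal hii
    ((ae_restrict_mem measurableSet_Ioc).mono fun t ht => Real.rpow_nonneg ht.1.le _),
    ← intervalIntegral.integral_of_le (by positivity), integral_rpow (Or.inl (by linarith))]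
  rw [← ofReal_norm, ENNReal.ofReal_rpow_of_pos hc, 
    ← ENNReal.ofReal_mul (by positivity), ← ENNReal.ofReal_mul (by
      have : 0 < p - 1 := by linarith
      positivity)]
  apply ENNReal.ofReal_le_ofReal
  apply le_of_eq
  have : ‖z‖ ^ p = ‖z‖ * ‖z‖ ^ (p - 1) := by
    nth_rewrite 2 [← Real.rpow_one ‖z‖]
    rw [← Real.rpow_add hc]; congr 1; ring
  rw [this, show p - 2 + 1 = p - 1 by ring, Real.mul_rpow (by norm_num) hc.le, 
    Real.zero_rpow (by linarith)]
  have h2 : p - 1 ≠ 0 := by linarith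
  field_simp
  ring

noncomputable def czC (p : ℝ) (A B : ENNReal) : ENNReal :=
  ENNReal.ofReal (2 ^ p) * (ENNReal.ofReal p * (A * ENNReal.ofReal (1 / (2 - p)) + 
    (4 * A + 4 + 4 * B) * 2 * ENNReal.ofReal (2 ^ (p - 1) / (p - 1))))

lemma cz_strong (p : ℝ) (hp : 1 < p) (hp2 : p < 2) (K : SchwartzMap ℝ ℂ) (A B : ENNReal)
    (hL2 : ∀ g : ℝ → ℂ, Measurable g → MemLp g 2 → 
      ∫⁻ x, ‖Tz K g x‖ₑ ^ 2 ≤ A * ∫⁻ x, ‖g x‖ₑ ^ 2)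
    (hH : ∀ a y r : ℝ, 0 < r → |y - a| ≤ r →
      ∫⁻ x in {x | 2 * r < |x - a|}, ‖K (x - y) - K (x - a)‖ₑ ≤ B)
    (f : ℝ → ℂ) (hfm : Measurable f) (hf : Integrable f) :
    ∫⁻ x, ‖Tz K f x‖ₑ ^ p ≤ czC p A B * ∫⁻ x, ‖f x‖ₑ ^ p := by
  have hp0 : 0 < p := by linarith
  have hTm := Tz_measurable K hfm
  set D := 4 * A + 4 + 4 * B with hD
  have e1 : ∫⁻ x, ‖Tz K f x‖ₑ ^ p = 
      ENNReal.ofReal (2 ^ p) * ∫⁻ x, ENNReal.ofReal ((‖Tz K f x‖ / 2) ^ p) := by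
    rw [← lintegral_const_mul _ (by fun_prop)]
    congr 1; ext x
    rw [← ENNReal.ofReal_mul (by positivity), ← Real.mul_rpow (by norm_num) (by positivity),
      mul_div_cancel₀ _ (by norm_num), ← ofReal_norm, ENNReal.ofReal_rpow_of_nonneg (norm_nonneg _) hp0.le]
  rw [e1, lintegral_rpow_eq_lintegral_meas_lt_mul _ 
    (Filter.Eventually.of_forall fun x => by positivity) (by fun_prop) hp0]
  rw [czC, mul_assoc, mul_assoc]
  refine mul_le_mul_right (mul_le_mul_right ?_ _) _
  have m1 : Measurable (fun z : ℝ × ℝ => ‖f z.2‖ₑ ^ 2 * 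
      {z : ℝ × ℝ | ‖f z.2‖ ≤ z.1}.indicator (fun z => ENNReal.ofReal (z.1 ^ (p - 3))) z) := by
    refine Measurable.mul (by fun_prop) (Measurable.indicator (by fun_prop) ?_)
    exact measurableSet_le (by fun_prop) (by fun_prop)
  have m2 : Measurable (fun z : ℝ × ℝ => ‖f z.2‖ₑ * 
      {z : ℝ × ℝ | z.1 < 2 * ‖f z.2‖}.indicator (fun z => ENNReal.ofReal (z.1 ^ (p - 2))) z) := by
    refine Measurable.mul (by fun_prop) (Measurable.indicator (by fun_prop) ?_)
    exact measurableSet_lt (by fun_prop) (by fun_prop)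
  have key : ∀ t ∈ Set.Ioi (0:ℝ), volume {x | t < ‖Tz K f x‖ / 2} * ENNReal.ofReal (t ^ (p - 1)) ≤
      A * (∫⁻ x, ‖f x‖ₑ ^ 2 * 
        {z : ℝ × ℝ | ‖f z.2‖ ≤ z.1}.indicator (fun z => ENNReal.ofReal (z.1 ^ (p - 3))) (t, x)) +
      D * 2 * (∫⁻ x, ‖f x‖ₑ * 
        {z : ℝ × ℝ | z.1 < 2 * ‖f z.2‖}.indicator (fun z => ENNReal.ofReal (z.1 ^ (p - 2))) (t, x)) := by
    intro t ht
    have ht0 : 0 < t := ht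
    have hw := cz_weak K A B hL2 hH f hfm hf t ht0
    have hset : {x | t < ‖Tz K f x‖ / 2} = {x | 2 * t < ‖Tz K f x‖} := by
      ext x; simp only [Set.mem_setOf_eq]; constructor <;> intro h <;> linarith
    rw [hset]
    refine (mul_le_mul_left hw _).trans (le_of_eq ?_)
    have hE1 : MeasurableSet {x | ‖f x‖ ≤ t} := measurableSet_le hfm.norm measurable_const
    have hE2 : MeasurableSet {x | t < 2 * ‖f x‖} :=
      measurableSet_lt measurable_const (hfm.norm.const_mul 2)
    have i1 : ∫⁻ x, ‖f x‖ₑ ^ 2 * 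
        {z : ℝ × ℝ | ‖f z.2‖ ≤ z.1}.indicator (fun z => ENNReal.ofReal (z.1 ^ (p - 3))) (t, x) =
        ENNReal.ofReal (t ^ (p - 3)) * ∫⁻ x in {x | ‖f x‖ ≤ t}, ‖f x‖ₑ ^ 2 := by
      rw [← lintegral_const_mul _ (by fun_prop), ← lintegral_indicator hE1]
      congr 1; ext x
      by_cases hx : ‖f x‖ ≤ t
      · rw [Set.indicator_of_mem (by exact hx), Set.indicator_of_mem (by exact hx), mul_comm]
      · rw [Set.indicator_of_notMem (by exact hx), Set.indicator_of_notMem (by exact hx), mul_zero]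
    have i2 : ∫⁻ x, ‖f x‖ₑ * 
        {z : ℝ × ℝ | z.1 < 2 * ‖f z.2‖}.indicator (fun z => ENNReal.ofReal (z.1 ^ (p - 2))) (t, x) =
        ENNReal.ofReal (t ^ (p - 2)) * ∫⁻ x in {x | t < 2 * ‖f x‖}, ‖f x‖ₑ := by
      rw [← lintegral_const_mul _ (by fun_prop), ← lintegral_indicator hE2]
      congr 1; ext x
      by_cases hx : t < 2 * ‖f x‖
      · rw [Set.indicator_of_mem (by exact hx), Set.indicator_of_mem (by exact hx), mul_comm]
      · rw [Set.indicator_of_notMem (by exact hx), Set.indicator_of_notMem (by exact hx), mul_zero]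
    have j1 : ENNReal.ofReal (t ^ (p - 3)) = (ENNReal.ofReal t)⁻¹ ^ 2 * ENNReal.ofReal (t ^ (p - 1)) := by
      rw [← ENNReal.ofReal_inv_of_pos ht0, ← ENNReal.ofReal_pow (by positivity), 
        ← ENNReal.ofReal_mul (by positivity)]
      congr 1
      rw [show p - 1 = p - 3 + (2:ℕ) by push_cast; ring, Real.rpow_add ht0, Real.rpow_natCast]
      field_simp
    have j2 : ENNReal.ofReal (t ^ (p - 2)) = (ENNReal.ofReal t)⁻¹ * ENNReal.ofReal (t ^ (p - 1)) := by
      rw [← ENNReal.ofReal_inv_of_pos ht0, ← ENNReal.ofReal_mul (by positivity)]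
      congr 1
      rw [show p - 1 = p - 2 + 1 by ring, Real.rpow_add ht0, Real.rpow_one]
      field_simp
    rw [i1, i2, j1, j2]
    ring
  calc ∫⁻ t in Set.Ioi (0:ℝ), volume {x | t < ‖Tz K f x‖ / 2} * ENNReal.ofReal (t ^ (p - 1)) 
      ≤ ∫⁻ t in Set.Ioi (0:ℝ), (A * (∫⁻ x, ‖f x‖ₑ ^ 2 * 
        {z : ℝ × ℝ | ‖f z.2‖ ≤ z.1}.indicator (fun z => ENNReal.ofReal (z.1 ^ (p - 3))) (t, x)) +
      D * 2 * (∫⁻ x, ‖f x‖ₑ * 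
        {z : ℝ × ℝ | z.1 < 2 * ‖f z.2‖}.indicator (fun z => ENNReal.ofReal (z.1 ^ (p - 2))) (t, x))) := 
        setLIntegral_mono ((m1.lintegral_prod_right'.const_mul _).add (m2.lintegral_prod_right'.const_mul _)) key
    _ = A * (∫⁻ x, ‖f x‖ₑ ^ 2 * ∫⁻ t in Set.Ioi (0:ℝ), 
        {t : ℝ | ‖f x‖ ≤ t}.indicator (fun t => ENNReal.ofReal (t ^ (p - 3))) t) +
      D * 2 * (∫⁻ x, ‖f x‖ₑ * ∫⁻ t in Set.Ioi (0:ℝ), 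
        {t : ℝ | t < 2 * ‖f x‖}.indicator (fun t => ENNReal.ofReal (t ^ (p - 2))) t) := by
        rw [lintegral_add_left (m1.lintegral_prod_right'.const_mul _), 
          lintegral_const_mul _ m1.lintegral_prod_right', lintegral_const_mul _ m2.lintegral_prod_right']
        congr 2
        · rw [lintegral_lintegral_swap m1.aemeasurable]
          congr 1; ext x
          exact lintegral_const_mul' (‖f x‖ₑ ^ 2) _ (by simp)
        · rw [lintegral_lintegral_swap m2.aemeasurable]
          congr 1; ext x
          exact lintegral_const_mul' (‖f x‖ₑ) _ (by simp)
    _ ≤ A * (∫⁻ x, ENNReal.ofReal (1 / (2 - p)) * ‖f x‖ₑ ^ p) + 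
        D * 2 * (∫⁻ x, ENNReal.ofReal (2 ^ (p - 1) / (p - 1)) * ‖f x‖ₑ ^ p) := by
        refine add_le_add (mul_le_mul_right (lintegral_mono fun x => inner1 p hp2 (f x)) _)
          (mul_le_mul_right (lintegral_mono fun x => inner2 p hp (f x)) _)
    _ = _ := by
        rw [lintegral_const_mul _ (by fun_prop), lintegral_const_mul _ (by fun_prop)]
        ring


open FourierTransform in
lemma L2_schwartz (K : SchwartzMap ℝ ℂ) (A : ℝ) (hA : ∀ ξ, ‖𝓕 K ξ‖ ≤ A) (φ : SchwartzMap ℝ ℂ) :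
    ∫⁻ x, ‖Tz K φ x‖ₑ ^ 2 ≤ ENNReal.ofReal (A ^ 2) * ∫⁻ x, ‖φ x‖ₑ ^ 2 := by
  set B := ContinuousLinearMap.mul ℂ ℂ with hB
  set F := SchwartzMap.convolution B φ K with hF
  have e1 : ∀ x, Tz K φ x = F x := by
    intro x
    rw [hF, SchwartzMap.convolution_apply, convolution, Tz]
    congr 1; ext y; simp [hB, mul_comm]
  have sqint : ∀ u : SchwartzMap ℝ ℂ, Integrable (fun x => ‖u x‖ ^ 2) := fun u =>
    (u.memLp 2).integrable_norm_pow (by norm_num)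
  have el : ∀ u : SchwartzMap ℝ ℂ, ∫⁻ x, ‖u x‖ₑ ^ 2 = ENNReal.ofReal (∫ x, ‖u x‖ ^ 2) := by
    intro u
    rw [ofReal_integral_eq_lintegral_ofReal (sqint u) (Filter.Eventually.of_forall fun x => by positivity)]
    congr 1; ext x
    rw [ENNReal.ofReal_pow (norm_nonneg _), ofReal_norm]
  simp_rw [e1]
  rw [el, el, ← ENNReal.ofReal_mul (by positivity), ← SchwartzMap.integral_norm_sq_fourier,
    ← SchwartzMap.integral_norm_sq_fourier φ, ← integral_const_mul]
  apply ENNReal.ofReal_le_ofReal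
  refine integral_mono (sqint _) ((sqint _).const_mul _) fun ξ => ?_
  have e2 : 𝓕 F ξ = 𝓕 φ ξ * 𝓕 K ξ := by
    rw [hF, SchwartzMap.fourier_convolution]; simp [hB]
  simp only
  rw [e2, norm_mul, mul_pow, mul_comm]
  have := hA ξ
  gcongr

lemma sq_eLpNorm (u : ℝ → ℂ) : ∫⁻ x, ‖u x‖ₑ ^ 2 = eLpNorm u 2 ^ 2 := by
  have := eLpNorm_nnreal_pow_eq_lintegral (μ := (volume : Measure ℝ)) (f := u) (p := 2) (by norm_num)
  simpa using this.symm

open FourierTransform in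
lemma L2_bound (K : SchwartzMap ℝ ℂ) (A : ℝ) (hA : ∀ ξ, ‖𝓕 K ξ‖ ≤ A) (f : ℝ → ℂ) (hf : MemLp f 2) :
    ∫⁻ x, ‖Tz K f x‖ₑ ^ 2 ≤ ENNReal.ofReal (A ^ 2) * ∫⁻ x, ‖f x‖ₑ ^ 2 := by
  have hd := (SchwartzMap.denseRange_toLpCLM (E := ℝ) (F := ℂ) (p := 2) (by simp) (μ := volume))
  obtain ⟨s, hs, hlim⟩ := mem_closure_iff_seq_limit.1 (hd (hf.toLp f))
  choose φ hφ using hs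
  have hlim' : Filter.Tendsto (fun n => (φ n).toLp 2 (volume : Measure ℝ)) Filter.atTop (nhds (hf.toLp f)) := by
    refine hlim.congr fun n => ?_
    rw [← hφ n]; rfl
  have hk : ∀ x, MemLp (fun y => starRingEnd ℂ (K (x - y))) 2 (volume : Measure ℝ) := by
    intro x
    have h1 : MemLp (fun y => K (x - y)) 2 (volume : Measure ℝ) :=
      (K.memLp 2).comp_measurePreserving (Measure.measurePreserving_sub_left volume x)
    exact h1.star
  have hT : ∀ (u : ℝ → ℂ) (hu : MemLp u 2 volume) x, Tz K u x = inner ℂ ((hk x).toLp _) (hu.toLp u) := by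
    intro u hu x
    rw [L2.inner_def, Tz]
    apply integral_congr_ae
    filter_upwards [(hk x).coeFn_toLp, hu.coeFn_toLp] with y h1 h2
    rw [h1, h2]; simp [mul_comm]
  have hpt : ∀ x, Filter.Tendsto (fun n => ‖Tz K (φ n) x‖ₑ ^ 2) Filter.atTop (nhds (‖Tz K f x‖ₑ ^ 2)) := by
    intro x
    have h1 : Filter.Tendsto (fun n => Tz K (φ n) x) Filter.atTop (nhds (Tz K f x)) := by
      rw [hT f hf x]
      simp_rw [fun n => hT (φ n) ((φ n).memLp 2) x]
      exact Filter.Tendsto.inner tendsto_const_nhds hlim'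
    exact ((ENNReal.continuous_pow 2).tendsto _).comp ((continuous_enorm.tendsto _).comp h1)
  have hnorm : Filter.Tendsto (fun n => ∫⁻ x, ‖φ n x‖ₑ ^ 2) Filter.atTop (nhds (∫⁻ x, ‖f x‖ₑ ^ 2)) := by
    have h1 : Filter.Tendsto (fun n => ‖(φ n).toLp 2 (volume : Measure ℝ)‖ₑ) Filter.atTop (nhds ‖hf.toLp f‖ₑ) :=
      (continuous_enorm.tendsto _).comp hlim'
    have h2 := ((ENNReal.continuous_pow 2).tendsto _).comp h1
    rw [Lp.enorm_toLp, ← sq_eLpNorm] at h2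
    refine h2.congr fun n => ?_
    rw [sq_eLpNorm]
    simp only [Function.comp]
    congr 1
    exact Lp.enorm_toLp _
  calc ∫⁻ x, ‖Tz K f x‖ₑ ^ 2 = ∫⁻ x, Filter.liminf (fun n => ‖Tz K (φ n) x‖ₑ ^ 2) Filter.atTop := by
        congr 1; ext x; exact (hpt x).liminf_eq.symm
    _ ≤ Filter.liminf (fun n => ∫⁻ x, ‖Tz K (φ n) x‖ₑ ^ 2) Filter.atTop :=
        lintegral_liminf_le fun n => (Tz_measurable K (φ n).continuous.measurable).enorm.pow_const 2
    _ ≤ Filter.liminf (fun n => ENNReal.ofReal (A ^ 2) * ∫⁻ x, ‖φ n x‖ₑ ^ 2) Filter.atTop :=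
        Filter.liminf_le_liminf (Filter.Eventually.of_forall fun n => L2_schwartz K A hA (φ n))
    _ = _ := (ENNReal.Tendsto.const_mul hnorm (Or.inr ENNReal.ofReal_ne_top)).liminf_eq


noncomputable def Mone (φ : SchwartzMap ℝ ℂ) : ℝ := ∫ x, ‖deriv φ x‖
noncomputable def Mtwo (φ : SchwartzMap ℝ ℂ) : ℝ := ∫ x, |x| * ‖φ x‖

lemma Mone_nonneg (φ : SchwartzMap ℝ ℂ) : 0 ≤ Mone φ := integral_nonneg fun _ => norm_nonneg _
lemma Mtwo_nonneg (φ : SchwartzMap ℝ ℂ) : 0 ≤ Mtwo φ := integral_nonneg fun _ => by positivity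

lemma deriv_int (φ : SchwartzMap ℝ ℂ) : Integrable (deriv φ) := by
  have := (SchwartzMap.derivCLM ℂ ℂ φ).integrable (μ := volume)
  refine this.congr (Filter.Eventually.of_forall fun x => ?_)
  simp [SchwartzMap.derivCLM_apply]

lemma deriv_cont (φ : SchwartzMap ℝ ℂ) : Continuous (deriv φ) := by
  have := (SchwartzMap.derivCLM ℂ ℂ φ).continuous
  refine this.congr fun x => ?_
  simp [SchwartzMap.derivCLM_apply]

lemma mul_int (φ : SchwartzMap ℝ ℂ) : Integrable (fun x => |x| * ‖φ x‖) := by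
  have := φ.integrable_pow_mul volume 1
  simpa using this

lemma lint_Mone (φ : SchwartzMap ℝ ℂ) : ∫⁻ x, ‖deriv φ x‖ₑ = ENNReal.ofReal (Mone φ) := by
  rw [Mone, ofReal_integral_norm_eq_lintegral_enorm (deriv_int φ)]

lemma lint_Mtwo (φ : SchwartzMap ℝ ℂ) : ∫⁻ x, ENNReal.ofReal (|x| * ‖φ x‖) = ENNReal.ofReal (Mtwo φ) := by
  rw [Mtwo, ofReal_integral_eq_lintegral_ofReal (mul_int φ) (Filter.Eventually.of_forall fun x => by positivity)]

lemma horm1 (φ : SchwartzMap ℝ ℂ) (a y : ℝ) :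
    ∫⁻ x, ‖φ (x - y) - φ (x - a)‖ₑ ≤ ENNReal.ofReal (|y - a| * Mone φ) := by
  have h1 : ∀ x, ‖φ (x - y) - φ (x - a)‖ₑ ≤
      ∫⁻ t in Set.Ioc (0:ℝ) 1, ‖a - y‖ₑ * ‖deriv φ (x - a + t * (a - y))‖ₑ := by
    intro x
    have hd : ∀ t ∈ Set.uIcc (0:ℝ) 1, HasDerivAt (fun t => φ (x - a + t * (a - y)))
        ((a - y) • deriv φ (x - a + t * (a - y))) t := by
      intro t _
      have h := (φ.hasDerivAt (x - a + t * (a - y))).scomp t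
        (((hasDerivAt_id t).mul_const (a - y)).const_add (x - a))
      simpa [Function.comp_def] using h
    have hc : Continuous (fun t => (a - y) • deriv φ (x - a + t * (a - y))) := by
      have := deriv_cont φ
      fun_prop
    have h2 := intervalIntegral.integral_eq_sub_of_hasDerivAt hd (hc.intervalIntegrable _ _)
    have h3 : φ (x - y) - φ (x - a) = ∫ t in Set.Ioc (0:ℝ) 1, (a - y) • deriv φ (x - a + t * (a - y)) := by
      rw [← intervalIntegral.integral_of_le zero_le_one, h2]
      congr 2 <;> ring_nf
    rw [h3]
    refine (enorm_integral_le_lintegral_enorm _).trans (le_of_eq ?_)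
    simp_rw [enorm_smul]
  have hm : Measurable (deriv φ) := (deriv_cont φ).measurable
  calc _ ≤ ∫⁻ x, ∫⁻ t in Set.Ioc (0:ℝ) 1, ‖a - y‖ₑ * ‖deriv φ (x - a + t * (a - y))‖ₑ := lintegral_mono h1
    _ = ∫⁻ t in Set.Ioc (0:ℝ) 1, ∫⁻ x, ‖a - y‖ₑ * ‖deriv φ (x - a + t * (a - y))‖ₑ := by
        apply lintegral_lintegral_swap
        apply Measurable.aemeasurable
        apply Measurable.const_mul
        apply Measurable.enorm
        show Measurable (fun z : ℝ × ℝ => deriv φ (z.1 - a + z.2 * (a - y)))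
        exact hm.comp (by fun_prop)
    _ = ∫⁻ t in Set.Ioc (0:ℝ) 1, ENNReal.ofReal (|y - a| * Mone φ) := by
        congr 1; ext t
        rw [lintegral_const_mul _ (by fun_prop)]
        have : ∫⁻ x, ‖deriv φ (x - a + t * (a - y))‖ₑ = ∫⁻ x, ‖deriv φ x‖ₑ := by
          have := lintegral_add_right_eq_self (μ := (volume : Measure ℝ)) (fun x => ‖deriv φ x‖ₑ) (-a + t * (a - y))
          rw [← this]; congr 1; ext x; congr 2; ring
        rw [this, lint_Mone, ← ofReal_norm, ← ENNReal.ofReal_mul (norm_nonneg _), Real.norm_eq_abs, abs_sub_comm]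
    _ = _ := by simp

lemma horm2 (φ : SchwartzMap ℝ ℂ) (a y r : ℝ) (hr : 0 < r) (hy : |y - a| ≤ r) :
    ∫⁻ x in {x | 2 * r < |x - a|}, ‖φ (x - y) - φ (x - a)‖ₑ ≤ ENNReal.ofReal (2 * Mtwo φ / r) := by
  have hm : Measurable φ := φ.continuous.measurable
  have hS : MeasurableSet {x : ℝ | 2 * r < |x - a|} := measurableSet_lt (by fun_prop) (by fun_prop)
  have key : ∀ b z : ℝ, r ≤ |z - b| → ‖φ (z - b)‖ₑ ≤ ENNReal.ofReal (1 / r) * ENNReal.ofReal (|z - b| * ‖φ (z - b)‖) := by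
    intro b z h
    rw [← ENNReal.ofReal_mul (by positivity), ← ofReal_norm]
    apply ENNReal.ofReal_le_ofReal
    rw [one_div, ← div_eq_inv_mul, le_div_iff₀ hr, mul_comm]
    gcongr
  have tr : ∀ b : ℝ, ∫⁻ x, ENNReal.ofReal (|x - b| * ‖φ (x - b)‖) = ENNReal.ofReal (Mtwo φ) := by
    intro b
    rw [← lint_Mtwo]
    exact lintegral_sub_right_eq_self (fun x => ENNReal.ofReal (|x| * ‖φ x‖)) b
  calc _ ≤ ∫⁻ x in {x | 2 * r < |x - a|}, ENNReal.ofReal (1 / r) * (ENNReal.ofReal (|x - y| * ‖φ (x - y)‖) +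
        ENNReal.ofReal (|x - a| * ‖φ (x - a)‖)) := by
        refine setLIntegral_mono' hS fun x hx => ?_
        simp only [Set.mem_setOf_eq] at hx
        rw [mul_add]
        refine enorm_sub_le.trans (add_le_add (key _ _ ?_) (key _ _ ?_))
        · have := abs_sub_abs_le_abs_sub (x - a) (y - a)
          have e : x - a - (y - a) = x - y := by ring
          rw [e] at this; linarith
        · linarith
    _ ≤ ∫⁻ x, ENNReal.ofReal (1 / r) * (ENNReal.ofReal (|x - y| * ‖φ (x - y)‖) +
        ENNReal.ofReal (|x - a| * ‖φ (x - a)‖)) := setLIntegral_le_lintegral _ _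
    _ = _ := by
        rw [lintegral_const_mul _ (by fun_prop), lintegral_add_left (by fun_prop), tr, tr,
          ← ENNReal.ofReal_add (Mtwo_nonneg _) (Mtwo_nonneg _), ← ENNReal.ofReal_mul (by positivity)]
        congr 1; ring

open FourierTransform in
lemma four1 (φ : SchwartzMap ℝ ℂ) (ξ : ℝ) : (2 * Real.pi * |ξ|) * ‖𝓕 φ ξ‖ ≤ Mone φ := by
  have h := congrFun (Real.fourier_deriv (f := φ) φ.integrable φ.differentiable (deriv_int φ)) ξ
  have h2 : ‖𝓕 (deriv φ) ξ‖ ≤ Mone φ := VectorFourier.norm_fourierIntegral_le_integral_norm _ _ _ _ _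
  rw [h, norm_smul] at h2
  rw [SchwartzMap.fourier_coe]
  simpa [abs_of_pos Real.pi_pos] using h2

open FourierTransform in
lemma four2 (φ : SchwartzMap ℝ ℂ) (h0 : ∫ x, φ x = 0) (ξ : ℝ) : ‖𝓕 φ ξ‖ ≤ (2 * Real.pi * |ξ|) * Mtwo φ := by
  rw [SchwartzMap.fourier_coe, Real.fourier_real_eq_integral_exp_smul]
  have hi : Integrable (fun v : ℝ => Complex.exp (↑(-2 * Real.pi * v * ξ) * Complex.I) • φ v) := by
    have hc : Continuous (fun v : ℝ => Complex.exp (↑(-2 * Real.pi * v * ξ) * Complex.I)) := by fun_prop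
    refine (φ.integrable (μ := volume)).bdd_mul (c := 1) hc.aestronglyMeasurable (Filter.Eventually.of_forall fun v => ?_)
    rw [Complex.norm_exp_ofReal_mul_I]
  have e : ∫ v : ℝ, Complex.exp (↑(-2 * Real.pi * v * ξ) * Complex.I) • φ v =
      ∫ v : ℝ, (Complex.exp (↑(-2 * Real.pi * v * ξ) * Complex.I) • φ v - φ v) := by
    rw [integral_sub hi φ.integrable, h0, sub_zero]
  rw [e, Mtwo, ← integral_const_mul]
  refine norm_integral_le_of_norm_le ((mul_int φ).const_mul _) (Filter.Eventually.of_forall fun v => ?_)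
  have e2 : Complex.exp (↑(-2 * Real.pi * v * ξ) * Complex.I) • φ v - φ v =
    (Complex.exp (Complex.I * ↑(-2 * Real.pi * v * ξ)) - 1) * φ v := by
    rw [mul_comm Complex.I, smul_eq_mul]; ring
  rw [e2, norm_mul]
  have := Real.norm_exp_I_mul_ofReal_sub_one_le (x := -2 * Real.pi * v * ξ)
  have e3 : ‖-2 * Real.pi * v * ξ‖ = 2 * Real.pi * |ξ| * |v| := by
    simp [abs_mul, abs_of_pos Real.pi_pos]; ring
  rw [e3] at this
  calc _ ≤ (2 * Real.pi * |ξ| * |v|) * ‖φ v‖ := by gcongr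
    _ = _ := by ring

noncomputable def scl (c : ℝ) (hc : c ≠ 0) : ℝ ≃L[ℝ] ℝ :=
  ContinuousLinearEquiv.unitsEquivAut ℝ (Units.mk0 c hc)

noncomputable def dilc (ψ : SchwartzMap ℝ ℂ) (c : ℝ) (hc : c ≠ 0) : SchwartzMap ℝ ℂ :=
  (c : ℂ) • SchwartzMap.compCLMOfContinuousLinearEquiv ℂ (scl c hc) ψ

lemma dilc_apply (ψ : SchwartzMap ℝ ℂ) (c : ℝ) (hc : c ≠ 0) (x : ℝ) : dilc ψ c hc x = (c : ℂ) * ψ (c * x) := by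
  simp [dilc, scl, SchwartzMap.compCLMOfContinuousLinearEquiv_apply, mul_comm]

lemma dilc_Mtwo (ψ : SchwartzMap ℝ ℂ) (c : ℝ) (hc : 0 < c) : Mtwo (dilc ψ c hc.ne') = Mtwo ψ / c := by
  have h := Measure.integral_comp_mul_left (fun x => |x| * ‖ψ x‖) c
  rw [Mtwo, Mtwo, div_eq_inv_mul, ← abs_of_pos (inv_pos.2 hc), ← smul_eq_mul, ← h]
  congr 1; ext x
  rw [dilc_apply, norm_mul, abs_mul]
  simp; ring

lemma dilc_Mone (ψ : SchwartzMap ℝ ℂ) (c : ℝ) (hc : 0 < c) : Mone (dilc ψ c hc.ne') = c * Mone ψ := by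
  have h := Measure.integral_comp_mul_left (fun x => ‖deriv ψ x‖) c
  have hd : ∀ x, deriv (dilc ψ c hc.ne') x = (c:ℂ) * (c • deriv ψ (c * x)) := by
    intro x
    have e : ⇑(dilc ψ c hc.ne') = fun x => (c:ℂ) * ψ (c * x) := funext fun x => dilc_apply _ _ _ _
    rw [e]
    have h := (ψ.hasDerivAt (c * x)).scomp x ((hasDerivAt_id x).const_mul c)
    simp only [mul_one] at h
    exact (h.const_mul (c:ℂ)).deriv
  rw [Mone, Mone]
  have : ∀ x, ‖deriv (dilc ψ c hc.ne') x‖ = c ^ 2 * ‖deriv ψ (c * x)‖ := by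
    intro x; rw [hd, norm_mul, norm_smul]; simp [abs_of_pos hc]; ring
  simp_rw [this]
  rw [integral_const_mul, h, abs_of_pos (inv_pos.2 hc), smul_eq_mul]
  field_simp

lemma dilc_int (ψ : SchwartzMap ℝ ℂ) (c : ℝ) (hc : 0 < c) : ∫ x, dilc ψ c hc.ne' x = ∫ x, ψ x := by
  have h := Measure.integral_comp_mul_left (fun x => ψ x) c
  simp_rw [dilc_apply]
  rw [integral_const_mul, h, abs_of_pos (inv_pos.2 hc), Complex.real_smul, ← mul_assoc]
  have : (c:ℂ) ≠ 0 := by exact_mod_cast hc.ne'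
  push_cast
  rw [mul_inv_cancel₀ this, one_mul]

noncomputable def dil (ψ : SchwartzMap ℝ ℂ) (k : ℕ) : SchwartzMap ℝ ℂ := dilc ψ (2 ^ (k + 1)) (by positivity)

noncomputable def KN (ψ : SchwartzMap ℝ ℂ) (e : ℕ → ℂ) (N : ℕ) : SchwartzMap ℝ ℂ :=
  ∑ k ∈ Finset.range N, e k • dil ψ k

lemma dil_apply (ψ : SchwartzMap ℝ ℂ) (k : ℕ) (x : ℝ) : dil ψ k x = ((2 ^ (k + 1) : ℝ) : ℂ) * ψ (2 ^ (k + 1) * x) :=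
  dilc_apply _ _ _ _

lemma KN_apply (ψ : SchwartzMap ℝ ℂ) (e : ℕ → ℂ) (N : ℕ) (x : ℝ) :
    KN ψ e N x = ∑ k ∈ Finset.range N, e k * dil ψ k x := by
  simp [KN, sum_apply]

lemma gsum (N : ℕ) : ∀ s : ℝ, 0 < s →
    (1 ≤ s → ∑ k ∈ Finset.range N, min (2 ^ k * s) (1 / (2 ^ k * s)) ≤ 2 / s) ∧
    (s < 1 → ∑ k ∈ Finset.range N, min (2 ^ k * s) (1 / (2 ^ k * s)) ≤ 4 - s) := by
  induction N with
  | zero => intro s hs; simp; exact ⟨fun _ => by positivity, fun _ => by linarith⟩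
  | succ N ih =>
    intro s hs
    obtain ⟨h1, h2⟩ := ih (2 * s) (by positivity)
    have e : ∑ k ∈ Finset.range N, min (2 ^ (k + 1) * s) (1 / (2 ^ (k + 1) * s)) =
      ∑ k ∈ Finset.range N, min (2 ^ k * (2 * s)) (1 / (2 ^ k * (2 * s))) := by
      refine Finset.sum_congr rfl fun k _ => ?_
      rw [pow_succ, mul_assoc]
    rw [Finset.sum_range_succ', e]
    simp only [pow_zero, one_mul]
    refine ⟨fun hs1 => ?_, fun hs1 => ?_⟩
    · have := h1 (by linarith)
      have h3 := min_le_right s (1 / s)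
      have : 2 / (2 * s) + 1 / s = 2 / s := by field_simp; norm_num
      linarith
    · have h3 := min_le_left s (1 / s)
      by_cases h : 1 ≤ 2 * s
      · have h4 := h1 h
        have : 2 / (2 * s) ≤ 4 - 2 * s := by
          rw [div_le_iff₀ (by positivity)]; nlinarith
        linarith
      · have := h2 (not_le.1 h)
        linarith

lemma gsum4 (N : ℕ) (s : ℝ) (hs : 0 < s) :
    ∑ k ∈ Finset.range N, min (2 ^ k * s) (1 / (2 ^ k * s)) ≤ 4 := by
  obtain ⟨h1, h2⟩ := gsum N s hs
  by_cases h : 1 ≤ s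
  · refine (h1 h).trans ?_
    rw [div_le_iff₀ hs]; linarith
  · have := h2 (not_le.1 h); linarith

open FourierTransform in
lemma KN_fourier (ψ : SchwartzMap ℝ ℂ) (h0 : ∫ x, ψ x = 0) (e : ℕ → ℂ) (he : ∀ k, ‖e k‖ ≤ 1) (N : ℕ) (ξ : ℝ) :
    ‖𝓕 (KN ψ e N) ξ‖ ≤ 4 * (Mone ψ + 2 * Mtwo ψ) := by
  have hM1 := Mone_nonneg ψ
  have hM2 := Mtwo_nonneg ψ
  have e1 : 𝓕 (KN ψ e N) = ∑ k ∈ Finset.range N, e k • 𝓕 (dil ψ k) := by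
    rw [KN, FourierTransform.fourier_sum]
    simp_rw [FourierTransform.fourier_smul]
  have e2 : 𝓕 (KN ψ e N) ξ = ∑ k ∈ Finset.range N, e k * 𝓕 (dil ψ k) ξ := by
    rw [e1, sum_apply]; simp
  rw [e2]
  have hb : ∀ k, ‖e k * 𝓕 (dil ψ k) ξ‖ ≤ ‖𝓕 (dil ψ k) ξ‖ := by
    intro k; rw [norm_mul]
    exact mul_le_of_le_one_left (norm_nonneg _) (he k)
  have f1 : ∀ k, (2 * Real.pi * |ξ|) * ‖𝓕 (dil ψ k) ξ‖ ≤ 2 ^ (k+1) * Mone ψ := by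
    intro k
    have := four1 (dil ψ k) ξ
    rwa [dil, dilc_Mone ψ _ (by positivity)] at this
  have f2 : ∀ k, ‖𝓕 (dil ψ k) ξ‖ ≤ (2 * Real.pi * |ξ|) * (Mtwo ψ / 2 ^ (k+1)) := by
    intro k
    have := four2 (dil ψ k) (by rw [dil, dilc_int ψ _ (by positivity), h0]) ξ
    rwa [dil, dilc_Mtwo ψ _ (by positivity)] at this
  by_cases hξ : ξ = 0
  · have : ∀ k, ‖𝓕 (dil ψ k) ξ‖ = 0 := by
      intro k
      have := f2 k
      rw [hξ] at this ⊢; simp at this ⊢; exact this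
    calc _ ≤ ∑ k ∈ Finset.range N, ‖e k * 𝓕 (dil ψ k) ξ‖ := norm_sum_le _ _
      _ ≤ ∑ k ∈ Finset.range N, 0 := Finset.sum_le_sum fun k _ => by rw [← this k]; exact hb k
      _ ≤ _ := by simp; positivity
  set w := 2 * Real.pi * |ξ| with hw
  have hwp : 0 < w := by have := abs_pos.2 hξ; have := Real.pi_pos; positivity
  calc _ ≤ ∑ k ∈ Finset.range N, ‖e k * 𝓕 (dil ψ k) ξ‖ := norm_sum_le _ _
    _ ≤ ∑ k ∈ Finset.range N, min (2 ^ k * (2 / w)) (1 / (2 ^ k * (2 / w))) * (Mone ψ + 2 * Mtwo ψ) := by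
        refine Finset.sum_le_sum fun k _ => (hb k).trans ?_
        rw [min_mul_of_nonneg _ _ (by positivity)]
        refine le_min ?_ ?_
        · have := f1 k
          rw [mul_comm, ← le_div_iff₀ hwp] at this
          refine this.trans ?_
          calc _ = 2 ^ k * (2 / w) * Mone ψ := by rw [pow_succ]; ring
            _ ≤ _ := by gcongr; linarith
        · refine (f2 k).trans ?_
          calc _ = 1 / (2 ^ k * (2 / w)) * Mtwo ψ := by rw [pow_succ]; field_simp
            _ ≤ _ := by gcongr; linarith
    _ ≤ _ := by
        rw [← Finset.sum_mul]
        gcongr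
        exact gsum4 N _ (by positivity)

lemma KN_horm (ψ : SchwartzMap ℝ ℂ) (e : ℕ → ℂ) (he : ∀ k, ‖e k‖ ≤ 1) (N : ℕ) (a y r : ℝ) (hr : 0 < r)
    (hy : |y - a| ≤ r) :
    ∫⁻ x in {x | 2 * r < |x - a|}, ‖KN ψ e N (x - y) - KN ψ e N (x - a)‖ₑ ≤
      ENNReal.ofReal (4 * (Mone ψ + 4 * Mtwo ψ)) := by
  have hM1 := Mone_nonneg ψ
  have hM2 := Mtwo_nonneg ψ
  have hm : ∀ k, Measurable (dil ψ k) := fun k => (dil ψ k).continuous.measurable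
  calc _ ≤ ∫⁻ x in {x | 2 * r < |x - a|}, ∑ k ∈ Finset.range N, ‖dil ψ k (x - y) - dil ψ k (x - a)‖ₑ := by
        refine lintegral_mono fun x => ?_
        rw [KN_apply, KN_apply, ← Finset.sum_sub_distrib]
        refine (enorm_sum_le _ _).trans (Finset.sum_le_sum fun k _ => ?_)
        rw [← mul_sub, enorm_mul]
        refine mul_le_of_le_one_left zero_le ?_
        rw [← ofReal_norm]
        exact ENNReal.ofReal_le_one.2 (he k)
    _ = ∑ k ∈ Finset.range N, ∫⁻ x in {x | 2 * r < |x - a|}, ‖dil ψ k (x - y) - dil ψ k (x - a)‖ₑ := by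
        rw [lintegral_finsetSum]
        intro k _
        have := hm k
        fun_prop
    _ ≤ ∑ k ∈ Finset.range N, ENNReal.ofReal (min (2 ^ k * (2 * r)) (1 / (2 ^ k * (2 * r))) * (Mone ψ + 4 * Mtwo ψ)) := by
        refine Finset.sum_le_sum fun k _ => ?_
        rw [min_mul_of_nonneg _ _ (by positivity)]
        rw [(ENNReal.ofReal_mono).map_min]
        refine le_min ?_ ?_
        · refine (setLIntegral_le_lintegral _ _).trans ((horm1 (dil ψ k) a y).trans ?_)
          rw [dil, dilc_Mone ψ _ (by positivity)]
          apply ENNReal.ofReal_le_ofReal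
          calc |y - a| * (2 ^ (k+1) * Mone ψ) ≤ r * (2 ^ (k+1) * Mone ψ) := by gcongr
            _ = 2 ^ k * (2 * r) * Mone ψ := by rw [pow_succ]; ring
            _ ≤ _ := by gcongr; linarith
        · refine (horm2 (dil ψ k) a y r hr hy).trans ?_
          rw [dil, dilc_Mtwo ψ _ (by positivity)]
          apply ENNReal.ofReal_le_ofReal
          calc 2 * (Mtwo ψ / 2 ^ (k+1)) / r = 1 / (2 ^ k * (2 * r)) * (2 * Mtwo ψ) := by rw [pow_succ]; field_simp
            _ ≤ _ := by gcongr; linarith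
    _ ≤ _ := by
        rw [← ENNReal.ofReal_sum_of_nonneg (fun k _ => by positivity), ← Finset.sum_mul]
        apply ENNReal.ofReal_le_ofReal
        gcongr
        exact gsum4 N _ (by positivity)


noncomputable def rfl' (ψ : SchwartzMap ℝ ℂ) : SchwartzMap ℝ ℂ :=
  SchwartzMap.compCLMOfContinuousLinearEquiv ℂ (scl (-1) (by norm_num)) ψ

lemma rfl'_apply (ψ : SchwartzMap ℝ ℂ) (x : ℝ) : rfl' ψ x = ψ (-x) := by
  simp [rfl', scl, SchwartzMap.compCLMOfContinuousLinearEquiv_apply]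

lemma rfl'_int (ψ : SchwartzMap ℝ ℂ) (h0 : ∫ x, ψ x = 0) : ∫ x, rfl' ψ x = 0 := by
  simp_rw [rfl'_apply]
  rw [integral_neg_eq_self (fun x => ψ x) volume, h0]

lemma KN_rfl (ψ : SchwartzMap ℝ ℂ) (e : ℕ → ℂ) (N : ℕ) (x : ℝ) : KN (rfl' ψ) e N x = KN ψ e N (-x) := by
  simp_rw [KN_apply, dil_apply, rfl'_apply]
  simp

lemma sch_bdd (K : SchwartzMap ℝ ℂ) : ∃ B : ℝ, 0 ≤ B ∧ ∀ x, ‖K x‖ ≤ B := by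
  obtain ⟨B, hB⟩ := K.decay 0 0
  exact ⟨B, hB.1.le, fun x => by simpa using hB.2 x⟩

lemma czC_ne_top (p : ℝ) (A B : ENNReal) (hA : A ≠ ⊤) (hB : B ≠ ⊤) : czC p A B ≠ ⊤ := by
  have h4 : (4:ENNReal) ≠ ⊤ := by simp
  unfold czC
  refine ENNReal.mul_ne_top ENNReal.ofReal_ne_top (ENNReal.mul_ne_top ENNReal.ofReal_ne_top
    (ENNReal.add_ne_top.2 ⟨ENNReal.mul_ne_top hA ENNReal.ofReal_ne_top, ENNReal.mul_ne_top (ENNReal.mul_ne_top ?_ (by simp)) ENNReal.ofReal_ne_top⟩))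
  exact ENNReal.add_ne_top.2 ⟨ENNReal.add_ne_top.2 ⟨ENNReal.mul_ne_top h4 hA, h4⟩, ENNReal.mul_ne_top h4 hB⟩

lemma lp_lt2 (ψ : SchwartzMap ℝ ℂ) (h0 : ∫ x, ψ x = 0) (p : ℝ) (hp : 1 < p) (hp2 : p < 2) :
    ∃ C : ENNReal, C ≠ ⊤ ∧ ∀ e : ℕ → ℂ, (∀ k, ‖e k‖ ≤ 1) → ∀ N, ∀ f : ℝ → ℂ, Measurable f → Integrable f →
      ∫⁻ x, ‖Tz (KN ψ e N) f x‖ₑ ^ p ≤ C * ∫⁻ x, ‖f x‖ₑ ^ p := by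
  refine ⟨czC p (ENNReal.ofReal ((4 * (Mone ψ + 2 * Mtwo ψ)) ^ 2)) (ENNReal.ofReal (4 * (Mone ψ + 4 * Mtwo ψ))),
    czC_ne_top _ _ _ ENNReal.ofReal_ne_top ENNReal.ofReal_ne_top, fun e he N f hfm hf => ?_⟩
  exact cz_strong p hp hp2 _ _ _ (fun g _ hg => L2_bound _ _ (KN_fourier ψ h0 e he N) g hg)
    (fun a y r hr hy => KN_horm ψ e he N a y r hr hy) f hfm hf

lemma lp_dual (K K' : SchwartzMap ℝ ℂ) (hK : ∀ x, K' x = K (-x)) (p q : ℝ) (hpq : p.HolderConjugate q) (C : ENNReal)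
    (hC : C ≠ ⊤)
    (hT : ∀ g : ℝ → ℂ, Measurable g → Integrable g → ∫⁻ x, ‖Tz K' g x‖ₑ ^ q ≤ C * ∫⁻ x, ‖g x‖ₑ ^ q)
    (f : ℝ → ℂ) (hfm : Measurable f) (hf : Integrable f) (x : ℝ) :
    ∫⁻ s in Set.Ioc x (x + 1), ‖Tz K f s‖ₑ ^ p ≤ C ^ (p - 1) * ∫⁻ s, ‖f s‖ₑ ^ p := by
  obtain ⟨B, hB0, hB⟩ := sch_bdd K
  have hp1 := hpq.lt
  have hp0 := hpq.pos
  have hq0 := hpq.symm.pos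
  set u := Tz K f with hu
  have hum : Measurable u := Tz_measurable K hfm
  have hub : ∀ s, ‖u s‖ ≤ B * ∫ y, ‖f y‖ := by
    intro s
    rw [hu, Tz, ← integral_const_mul]
    refine norm_integral_le_of_norm_le (hf.norm.const_mul _) (Filter.Eventually.of_forall fun y => ?_)
    rw [norm_mul]; gcongr; exact hB _
  set D := B * ∫ y, ‖f y‖ with hD
  have hD0 : 0 ≤ D := (norm_nonneg _).trans (hub 0)
  set I := Set.Ioc x (x + 1) with hI
  have hIm : MeasurableSet I := measurableSet_Ioc
  set g0 : ℝ → ℂ := fun s => ((‖u s‖ ^ (p - 2) : ℝ) : ℂ) * starRingEnd ℂ (u s) with hg0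
  have hg0m : Measurable g0 := by
    apply Measurable.mul
    · exact Complex.measurable_ofReal.comp (hum.norm.pow_const _)
    · exact Complex.continuous_conj.measurable.comp hum
  have hg0n : ∀ s, ‖g0 s‖ = ‖u s‖ ^ (p - 1) := by
    intro s
    rw [hg0]; simp only [norm_mul, RCLike.norm_conj, Complex.norm_real]
    rw [Real.norm_of_nonneg (by positivity)]
    by_cases h : u s = 0
    · rw [h]; simp; rw [Real.zero_rpow (by linarith)]
    · have : 0 < ‖u s‖ := norm_pos_iff.2 h
      rw [← Real.rpow_add_one this.ne']; congr 1; ring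
  have hug0 : ∀ s, u s * g0 s = ((‖u s‖ ^ p : ℝ) : ℂ) := by
    intro s
    by_cases h : u s = 0
    · rw [h]; simp; rw [Real.zero_rpow (by linarith)]; simp
    · have : 0 < ‖u s‖ := norm_pos_iff.2 h
      have e1 : u s * g0 s = ((‖u s‖ ^ (p - 2) : ℝ) : ℂ) * (u s * starRingEnd ℂ (u s)) := by rw [hg0]; ring
      rw [e1, Complex.mul_conj, Complex.normSq_eq_norm_sq, ← Complex.ofReal_mul]
      congr 1
      rw [← Real.rpow_natCast, ← Real.rpow_add this]; congr 1; push_cast; ring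
  set g := I.indicator g0 with hg
  have hgm : Measurable g := hg0m.indicator hIm
  have hgb : ∀ s, ‖g0 s‖ ≤ D ^ (p - 1) := by
    intro s; rw [hg0n]; exact Real.rpow_le_rpow (norm_nonneg _) (hub s) (by linarith)
  have hgi : Integrable g := by
    rw [hg, integrable_indicator_iff hIm]
    refine Measure.integrableOn_of_bounded (M := D ^ (p-1)) (by simp [hI]) hg0m.aestronglyMeasurable
      (Filter.Eventually.of_forall hgb)
  set X := ∫⁻ s in I, ‖u s‖ₑ ^ p with hX
  have hXtop : X ≠ ⊤ := by
    refine ne_top_of_le_ne_top (b := ∫⁻ s in I, ENNReal.ofReal D ^ p) ?_ (lintegral_mono fun s => ?_)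
    · rw [setLIntegral_const]
      refine ENNReal.mul_ne_top (ENNReal.rpow_ne_top_of_nonneg hp0.le ENNReal.ofReal_ne_top) (by simp [hI])
    · rw [← ofReal_norm]
      exact ENNReal.rpow_le_rpow (ENNReal.ofReal_le_ofReal (hub s)) hp0.le
  -- pairing
  have hprod : Integrable (fun z : ℝ × ℝ => K (z.1 - z.2) * (g z.1 * f z.2)) (volume.prod volume) := by
    refine (hgi.mul_prod hf).bdd_mul (c := B) ?_ (Filter.Eventually.of_forall fun z => hB _)
    have := K.continuous
    exact Continuous.aestronglyMeasurable (by fun_prop)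
  have hpair : ∫ s, g s * u s = ∫ y, f y * Tz K' g y := by
    calc ∫ s, g s * u s = ∫ s, ∫ y, K (s - y) * (g s * f y) := by
          congr 1; ext s
          rw [hu, Tz, ← integral_const_mul]; congr 1; ext y; ring
      _ = ∫ y, ∫ s, K (s - y) * (g s * f y) := integral_integral_swap hprod
      _ = _ := by
          congr 1; ext y
          rw [Tz, ← integral_const_mul]; congr 1; ext s
          rw [hK, neg_sub]; ring
  have hXeq : X = ‖∫ s, g s * u s‖ₑ := by
    have e1 : ∀ s, g s * u s = I.indicator (fun s => ((‖u s‖ ^ p : ℝ) : ℂ)) s := by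
      intro s
      rw [hg, Set.indicator_apply, Set.indicator_apply]
      split_ifs
      · rw [mul_comm, hug0]
      · simp
    simp_rw [e1]
    rw [integral_indicator hIm, integral_complex_ofReal, ← ofReal_norm, Complex.norm_real,
      Real.norm_of_nonneg (integral_nonneg fun s => by positivity), ofReal_integral_eq_lintegral_ofReal]
    · rw [hX]; congr 1; ext s
      rw [← ENNReal.ofReal_rpow_of_nonneg (norm_nonneg _) hp0.le, ofReal_norm]
    · refine Measure.integrableOn_of_bounded (M := D ^ p) (by simp [hI]) (hum.norm.pow_const _).aestronglyMeasurable
        (Filter.Eventually.of_forall fun s => ?_)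
      rw [Real.norm_of_nonneg (by positivity)]
      exact Real.rpow_le_rpow (norm_nonneg _) (hub s) hp0.le
    · exact Filter.Eventually.of_forall fun s => by positivity
  have hgq : ∫⁻ s, ‖g s‖ₑ ^ q = X := by
    have e1 : ∀ s, ‖g s‖ₑ ^ q = I.indicator (fun s => ‖u s‖ₑ ^ p) s := by
      intro s
      rw [hg, Set.indicator_apply, Set.indicator_apply]
      split_ifs
      · rw [← ofReal_norm, hg0n, ← ENNReal.ofReal_rpow_of_nonneg (norm_nonneg _) (by linarith), ofReal_norm, ← ENNReal.rpow_mul]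
        congr 1
        exact hpq.sub_one_mul_conj
      · simp [hq0]
    simp_rw [e1]
    rw [lintegral_indicator hIm]
  set F := ∫⁻ s, ‖f s‖ₑ ^ p with hF
  have hle : X ≤ F ^ (1/p) * (C * X) ^ (1/q) := by
    calc X = ‖∫ y, f y * Tz K' g y‖ₑ := by rw [hXeq, hpair]
      _ ≤ ∫⁻ y, ‖f y * Tz K' g y‖ₑ := enorm_integral_le_lintegral_enorm _
      _ = ∫⁻ y, ((fun y => ‖f y‖ₑ) * (fun y => ‖Tz K' g y‖ₑ)) y := by simp [enorm_mul]
      _ ≤ F ^ (1/p) * (∫⁻ y, ‖Tz K' g y‖ₑ ^ q) ^ (1/q) :=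
          ENNReal.lintegral_mul_le_Lp_mul_Lq _ hpq hfm.enorm.aemeasurable (Tz_measurable K' hgm).enorm.aemeasurable
      _ ≤ _ := by
          gcongr
          rw [← hgq]
          exact hT g hgm hgi
  by_cases hX0 : X = 0
  · rw [hX0]; exact zero_le
  have h1 : X ^ p ≤ F * C ^ (p-1) * X ^ (p - 1) := by
    have := ENNReal.rpow_le_rpow hle hp0.le
    rw [ENNReal.mul_rpow_of_nonneg _ _ hp0.le, ← ENNReal.rpow_mul, ← ENNReal.rpow_mul] at this
    have e1 : 1 / p * p = 1 := by field_simp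
    have e2 : 1 / q * p = p - 1 := by
      have := hpq.sub_one_mul_conj
      field_simp; linarith
    rw [e1, e2, ENNReal.rpow_one, ENNReal.mul_rpow_of_nonneg _ _ (by linarith), ← mul_assoc] at this
    exact this
  have e3 : X ^ p = X * X ^ (p - 1) := by
    conv_rhs => rw [← ENNReal.rpow_one X, ← ENNReal.rpow_mul, one_mul, ← ENNReal.rpow_add _ _ hX0 hXtop]
    congr 1; ring
  rw [e3] at h1
  have hne : X ^ (p-1) ≠ 0 := by
    rw [Ne, ENNReal.rpow_eq_zero_iff]; push Not
    exact ⟨fun h => absurd h hX0, fun h => absurd h hXtop⟩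
  have hne2 : X ^ (p-1) ≠ ⊤ := ENNReal.rpow_ne_top_of_nonneg (by linarith) hXtop
  have := (ENNReal.mul_le_mul_iff_left hne hne2).1 h1
  rwa [mul_comm] at this

lemma lp_unif (ψ : SchwartzMap ℝ ℂ) (h0 : ∫ x, ψ x = 0) (p : ℝ) (hp : 1 < p) :
    ∃ C : ENNReal, C ≠ ⊤ ∧ ∀ e : ℕ → ℂ, (∀ k, ‖e k‖ ≤ 1) → ∀ N, ∀ f : ℝ → ℂ, Measurable f → Integrable f →
      ∫⁻ x, ‖f x‖ₑ ^ p ≠ ⊤ → ∀ x,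
      ∫⁻ s in Set.Ioc x (x + 1), ‖Tz (KN ψ e N) f s‖ₑ ^ p ≤ C * ∫⁻ x, ‖f x‖ₑ ^ p := by
  rcases lt_trichotomy p 2 with h | h | h
  · obtain ⟨C, hC, H⟩ := lp_lt2 ψ h0 p hp h
    exact ⟨C, hC, fun e he N f hfm hf _ x => (setLIntegral_le_lintegral _ _).trans (H e he N f hfm hf)⟩
  · refine ⟨ENNReal.ofReal ((4 * (Mone ψ + 2 * Mtwo ψ)) ^ 2), ENNReal.ofReal_ne_top, fun e he N f hfm hf hfin x => ?_⟩
    subst h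
    have e2 : ∀ a : ENNReal, a ^ (2:ℝ) = a ^ 2 := fun a => by
      exact_mod_cast ENNReal.rpow_natCast a 2
    simp_rw [e2] at hfin ⊢
    refine (setLIntegral_le_lintegral _ _).trans (L2_bound _ _ (KN_fourier ψ h0 e he N) f ⟨hfm.aestronglyMeasurable, ?_⟩)
    rw [sq_eLpNorm] at hfin
    refine lt_top_iff_ne_top.2 fun hh => hfin (by rw [hh]; simp)
  · have hpq := Real.HolderConjugate.conjExponent hp
    set q := p.conjExponent with hq
    have hq1 : 1 < q := hpq.symm.lt
    have hq2 : q < 2 := by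
      rw [hq, Real.conjExponent, div_lt_iff₀ (by linarith)]; linarith
    obtain ⟨C, hC, H⟩ := lp_lt2 (rfl' ψ) (rfl'_int ψ h0) q hq1 hq2
    refine ⟨C ^ (p - 1), ENNReal.rpow_ne_top_of_nonneg (by linarith) hC, fun e he N f hfm hf _ x => ?_⟩
    exact lp_dual _ (KN (rfl' ψ) e N) (KN_rfl ψ e N) p q hpq C hC (H e he N) f hfm hf x


noncomputable def sg (S : Finset ℕ) (k : ℕ) : ℂ := if k ∈ S then -1 else 1

lemma sg_norm (S : Finset ℕ) (k : ℕ) : ‖sg S k‖ ≤ 1 := by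
  unfold sg; split_ifs <;> simp

noncomputable def Zs (a : ℕ → ℂ) (N : ℕ) (S : Finset ℕ) : ℂ := ∑ k ∈ Finset.range N, sg S k * a k

lemma Zs_step (a : ℕ → ℂ) (N : ℕ) (F : ℂ → ℝ) :
    ∑ S ∈ (Finset.range (N+1)).powerset, F (Zs a (N+1) S) =
      ∑ S ∈ (Finset.range N).powerset, (F (Zs a N S + a N) + F (Zs a N S - a N)) := by
  rw [Finset.range_add_one, Finset.sum_powerset_insert (by simp), ← Finset.sum_add_distrib]
  refine Finset.sum_congr rfl fun S hS => ?_
  have hN : N ∉ S := fun h => by simpa using Finset.mem_powerset.1 hS h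
  congr 2
  · rw [Zs, Finset.sum_range_succ]; simp [sg, hN, Zs]
  · rw [Zs, Finset.sum_range_succ]
    have : ∑ k ∈ Finset.range N, sg (insert N S) k * a k = Zs a N S := by
      refine Finset.sum_congr rfl fun k hk => ?_
      have : k ≠ N := (Finset.mem_range.1 hk).ne
      simp [sg, this]
    rw [this]; simp [sg, sub_eq_add_neg]

lemma kh2 (a : ℕ → ℂ) (N : ℕ) : ∑ S ∈ (Finset.range N).powerset, ‖Zs a N S‖ ^ 2 =
    2 ^ N * ∑ k ∈ Finset.range N, ‖a k‖ ^ 2 := by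
  induction N with
  | zero => simp [Zs]
  | succ N ih =>
    rw [Zs_step a N (fun z => ‖z‖ ^ 2)]
    have : ∀ z w : ℂ, ‖z + w‖ ^ 2 + ‖z - w‖ ^ 2 = 2 * ‖z‖ ^ 2 + 2 * ‖w‖ ^ 2 := by
      intro z w
      have := parallelogram_law_with_norm ℝ z w
      nlinarith
    simp_rw [this]
    rw [Finset.sum_add_distrib, ← Finset.mul_sum, ih, Finset.sum_range_succ]
    simp; ring

lemma kh4 (a : ℕ → ℂ) (N : ℕ) : ∑ S ∈ (Finset.range N).powerset, ‖Zs a N S‖ ^ 4 ≤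
    2 ^ N * (3 * (∑ k ∈ Finset.range N, ‖a k‖ ^ 2) ^ 2) := by
  induction N with
  | zero => simp [Zs]
  | succ N ih =>
    rw [Zs_step a N (fun z => ‖z‖ ^ 4)]
    have h : ∀ z w : ℂ, ‖z + w‖ ^ 4 + ‖z - w‖ ^ 4 ≤ 2 * ‖z‖ ^ 4 + 12 * ‖w‖ ^ 2 * ‖z‖ ^ 2 + 2 * ‖w‖ ^ 4 := by
      intro z w
      have h1 := norm_add_sq_real z w
      have h2 := norm_sub_sq_real z w
      have h3 := abs_real_inner_le_norm z w
      have h4 : (inner ℝ z w) ^ 2 ≤ (‖z‖ * ‖w‖) ^ 2 := sq_le_sq' (by linarith [neg_abs_le (inner ℝ z w)]) ((le_abs_self _).trans h3)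
      have e1 : ‖z + w‖ ^ 4 = (‖z + w‖ ^ 2) ^ 2 := by ring
      have e2 : ‖z - w‖ ^ 4 = (‖z - w‖ ^ 2) ^ 2 := by ring
      rw [e1, e2, h1, h2]
      nlinarith
    refine (Finset.sum_le_sum fun S _ => h _ _).trans ?_
    rw [Finset.sum_add_distrib, Finset.sum_add_distrib, ← Finset.mul_sum, ← Finset.mul_sum, kh2, Finset.sum_range_succ]
    simp only [Finset.sum_const, Finset.card_powerset, Finset.card_range, nsmul_eq_mul]
    push_cast
    set Q := ∑ k ∈ Finset.range N, ‖a k‖ ^ 2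
    have : (0:ℝ) ≤ 2 ^ N := by positivity
    have h5 : 0 ≤ 2 ^ N * (‖a N‖ ^ 4) := by positivity
    have h6 : (2:ℝ) ^ (N + 1) * (3 * (Q + ‖a N‖ ^ 2) ^ 2) =
      2 * (2 ^ N * (3 * Q ^ 2)) + 12 * ‖a N‖ ^ 2 * (2 ^ N * Q) + 6 * (2 ^ N * ‖a N‖ ^ 4) := by ring
    rw [h6]
    linarith

lemma kh (a : ℕ → ℂ) (N : ℕ) (p : ℝ) (hp : 1 < p) :
    2 ^ N * (∑ k ∈ Finset.range N, ‖a k‖ ^ 2) ^ (p / 2) ≤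
      12 * ∑ S ∈ (Finset.range N).powerset, ‖Zs a N S‖ ^ p := by
  set Q := ∑ k ∈ Finset.range N, ‖a k‖ ^ 2 with hQ
  have hQ0 : 0 ≤ Q := Finset.sum_nonneg fun _ _ => by positivity
  set P := ∑ S ∈ (Finset.range N).powerset, ‖Zs a N S‖ ^ p with hP
  have hP0 : 0 ≤ P := Finset.sum_nonneg fun _ _ => by positivity
  have h2N : (0:ℝ) < 2 ^ N := by positivity
  by_cases h : 2 ≤ p
  · have := Real.rpow_arith_mean_le_arith_mean_rpow ((Finset.range N).powerset) (fun _ => ((2:ℝ) ^ N)⁻¹)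
      (fun S => ‖Zs a N S‖ ^ 2) (fun _ _ => by positivity) (by simp) (fun _ _ => by positivity) (p := p / 2) (by linarith)
    rw [← Finset.mul_sum, ← Finset.mul_sum, kh2, ← mul_assoc, inv_mul_cancel₀ h2N.ne', one_mul] at this
    have e : ∀ S, (‖Zs a N S‖ ^ 2) ^ (p / 2) = ‖Zs a N S‖ ^ p := by
      intro S
      rw [← Real.rpow_natCast, ← Real.rpow_mul (norm_nonneg _)]; congr 1; push_cast; ring
    simp_rw [e] at this
    rw [← div_eq_inv_mul, le_div_iff₀ h2N] at this
    rw [mul_comm]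
    linarith
  · push Not at h
    rcases hQ0.eq_or_lt with h0 | h0
    · rw [← h0, Real.zero_rpow (by linarith)]; simp; exact hP0
    have key : ∀ t : ℝ, 0 ≤ t → t ^ 2 ≤ (6 * Q) ^ (1 - p / 2) * t ^ p + t ^ 4 / (6 * Q) := by
      intro t ht
      have h6 : 0 < 6 * Q := by positivity
      rcases le_total (t ^ 2) (6 * Q) with h1 | h1
      · rcases ht.eq_or_lt with h3 | h3
        · rw [← h3]; simp; rw [Real.zero_rpow (by linarith)]; simp
        have : t ^ 2 = (t ^ 2) ^ (1 - p / 2) * t ^ p := by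
          rw [← Real.rpow_natCast, ← Real.rpow_mul ht, ← Real.rpow_add h3]; congr 1; push_cast; ring
        have h4 : (t ^ 2) ^ (1 - p / 2) ≤ (6 * Q) ^ (1 - p / 2) := Real.rpow_le_rpow (by positivity) h1 (by linarith)
        have h5 : (t ^ 2) ^ (1 - p / 2) * t ^ p ≤ (6 * Q) ^ (1 - p / 2) * t ^ p := by gcongr
        have h7 : 0 ≤ t ^ 4 / (6 * Q) := by positivity
        linarith
      · have : t ^ 2 ≤ t ^ 4 / (6 * Q) := by
          rw [le_div_iff₀ h6]; nlinarith [sq_nonneg t]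
        have h7 : 0 ≤ (6 * Q) ^ (1 - p / 2) * t ^ p := by positivity
        linarith
    have h1 := Finset.sum_le_sum (s := (Finset.range N).powerset) fun S _ => key ‖Zs a N S‖ (norm_nonneg _)
    rw [Finset.sum_add_distrib, ← Finset.mul_sum, ← Finset.sum_div, kh2] at h1
    have h2 := kh4 a N
    rw [← hQ] at h1 h2
    have h3 : (∑ S ∈ (Finset.range N).powerset, ‖Zs a N S‖ ^ 4) / (6 * Q) ≤ 2 ^ N * Q / 2 := by
      rw [div_le_iff₀ (by positivity)]; linarith
    have h4 : (6 * Q) ^ (1 - p / 2) ≤ 6 * Q ^ (1 - p / 2) := by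
      rw [Real.mul_rpow (by norm_num) hQ0]
      gcongr
      calc (6:ℝ) ^ (1 - p / 2) ≤ 6 ^ (1:ℝ) := Real.rpow_le_rpow_of_exponent_le (by norm_num) (by linarith)
        _ = 6 := by simp
    have h5 : (6 * Q) ^ (1 - p / 2) * P ≤ 6 * Q ^ (1 - p / 2) * P := by gcongr
    have h6 : 2 ^ N * Q ≤ Q ^ (1 - p / 2) * (12 * P) := by linarith
    have h7 : Q = Q ^ (1 - p / 2) * Q ^ (p / 2) := by
      rw [← Real.rpow_add h0]; simp
    have h8 : 0 < Q ^ (1 - p / 2) := by positivity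
    refine le_of_mul_le_mul_left ?_ h8
    calc _ = 2 ^ N * (Q ^ (1 - p / 2) * Q ^ (p / 2)) := by ring
      _ = 2 ^ N * Q := by rw [← h7]
      _ ≤ _ := h6

lemma kh_enn (a : ℕ → ℂ) (N : ℕ) (p : ℝ) (hp : 1 < p) :
    2 ^ N * (∑ k ∈ Finset.range N, ‖a k‖ₑ ^ 2) ^ (p / 2) ≤
      12 * ∑ S ∈ (Finset.range N).powerset, ‖Zs a N S‖ₑ ^ p := by
  have h := ENNReal.ofReal_le_ofReal (kh a N p hp)
  rw [ENNReal.ofReal_mul (by positivity), ENNReal.ofReal_mul (by positivity),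
    ← ENNReal.ofReal_rpow_of_nonneg (Finset.sum_nonneg fun _ _ => by positivity) (by linarith),
    ENNReal.ofReal_sum_of_nonneg (fun _ _ => by positivity), ENNReal.ofReal_sum_of_nonneg (fun _ _ => by positivity),
    ENNReal.ofReal_pow (by norm_num)] at h
  have e1 : ∀ z : ℂ, ENNReal.ofReal (‖z‖ ^ 2) = ‖z‖ₑ ^ 2 := fun z => by
    rw [ENNReal.ofReal_pow (norm_nonneg _), ofReal_norm]
  have e2 : ∀ z : ℂ, ENNReal.ofReal (‖z‖ ^ p) = ‖z‖ₑ ^ p := fun z => by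
    rw [← ENNReal.ofReal_rpow_of_nonneg (norm_nonneg _) (by linarith), ofReal_norm]
  simpa only [e1, e2, ENNReal.ofReal_ofNat] using h

/-- local square function bound -/
lemma sq_fun (ψ : SchwartzMap ℝ ℂ) (h0 : ∫ x, ψ x = 0) (p : ℝ) (hp : 1 < p) :
    ∃ C : ENNReal, C ≠ ⊤ ∧ ∀ f : ℝ → ℂ, Measurable f → Integrable f →
      ∫⁻ x, ‖f x‖ₑ ^ p ≠ ⊤ → ∀ x,
      ∫⁻ s in Set.Ioc x (x + 1), (∑' k, ‖Tz (dil ψ k) f s‖ₑ ^ 2) ^ (p / 2) ≤ C * ∫⁻ x, ‖f x‖ₑ ^ p := by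
  obtain ⟨C, hC, H⟩ := lp_unif ψ h0 p hp
  refine ⟨12 * C, ENNReal.mul_ne_top (by simp) hC, fun f hfm hf hfin x => ?_⟩
  have hm : ∀ k, Measurable (Tz (dil ψ k) f) := fun k => Tz_measurable _ hfm
  have hlin : ∀ (S : Finset ℕ) N s, Tz (KN ψ (sg S) N) f s = Zs (fun k => Tz (dil ψ k) f s) N S := by
    intro S N s
    rw [Zs, Tz]
    simp_rw [KN_apply, Finset.sum_mul, mul_assoc]
    rw [integral_finset_sum _ (fun k _ => (Tz_integrable (dil ψ k) hf s).const_mul _)]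
    refine Finset.sum_congr rfl fun k _ => ?_
    rw [integral_const_mul, Tz]
  have hN : ∀ N, ∫⁻ s in Set.Ioc x (x + 1), (∑ k ∈ Finset.range N, ‖Tz (dil ψ k) f s‖ₑ ^ 2) ^ (p / 2) ≤
      12 * C * ∫⁻ x, ‖f x‖ₑ ^ p := by
    intro N
    have h2 : (2:ENNReal) ^ N ≠ 0 := by simp
    have h2' : (2:ENNReal) ^ N ≠ ⊤ := by simp
    refine (ENNReal.mul_le_mul_iff_right h2 h2').1 ?_
    calc _ = ∫⁻ s in Set.Ioc x (x + 1), 2 ^ N * (∑ k ∈ Finset.range N, ‖Tz (dil ψ k) f s‖ₑ ^ 2) ^ (p / 2) := by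
          rw [lintegral_const_mul]; fun_prop
      _ ≤ ∫⁻ s in Set.Ioc x (x + 1), 12 * ∑ S ∈ (Finset.range N).powerset, ‖Tz (KN ψ (sg S) N) f s‖ₑ ^ p := by
          refine lintegral_mono fun s => ?_
          simp_rw [hlin]
          exact kh_enn _ N p hp
      _ = 12 * ∑ S ∈ (Finset.range N).powerset, ∫⁻ s in Set.Ioc x (x + 1), ‖Tz (KN ψ (sg S) N) f s‖ₑ ^ p := by
          have hm' : ∀ S, Measurable (Tz (KN ψ (sg S) N) f) := fun S => Tz_measurable _ hfm
          rw [lintegral_const_mul, lintegral_finsetSum]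
          · intro S _; exact (hm' S).enorm.pow_const _
          · exact Finset.measurable_sum _ fun S _ => (hm' S).enorm.pow_const _
      _ ≤ 12 * ∑ S ∈ (Finset.range N).powerset, C * ∫⁻ x, ‖f x‖ₑ ^ p := by
          gcongr with S _
          exact H _ (sg_norm S) N f hfm hf hfin x
      _ = _ := by
          simp only [Finset.sum_const, Finset.card_powerset, Finset.card_range, nsmul_eq_mul]
          push_cast; ring
  have hsup : ∀ s, (∑' k, ‖Tz (dil ψ k) f s‖ₑ ^ 2) ^ (p / 2) =
      ⨆ N, (∑ k ∈ Finset.range N, ‖Tz (dil ψ k) f s‖ₑ ^ 2) ^ (p / 2) := by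
    intro s
    rw [ENNReal.tsum_eq_iSup_nat]
    exact (ENNReal.orderIsoRpow (p/2) (by linarith)).map_iSup _
  simp_rw [hsup]
  rw [lintegral_iSup]
  · exact iSup_le hN
  · intro N; fun_prop
  · intro N M hNM s
    simp only
    have : Finset.range N ⊆ Finset.range M := Finset.range_mono hNM
    gcongr


lemma enn_add_rpow (a b : ENNReal) (r : ℝ) (hr : 0 ≤ r) : (a + b) ^ r ≤ 2 ^ r * (a ^ r + b ^ r) := by
  have h : ∀ a b : ENNReal, a ≤ b → (a + b) ^ r ≤ 2 ^ r * (a ^ r + b ^ r) := by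
    intro a b hab
    calc (a + b) ^ r ≤ (2 * b) ^ r := by
          apply ENNReal.rpow_le_rpow _ hr
          rw [two_mul]; gcongr
      _ = 2 ^ r * b ^ r := ENNReal.mul_rpow_of_nonneg _ _ hr
      _ ≤ _ := by gcongr; exact le_add_self
  rcases le_total a b with hab | hab
  · exact h a b hab
  · rw [add_comm, add_comm (a ^ r)]; exact h b a hab

lemma three_cover (g : ℝ → ENNReal) (A : ENNReal) (hA : ∀ x, ∫⁻ s in Set.Ioc x (x + 1), g s ≤ A) (x : ℝ) :
    ∫⁻ s in Set.Ioc (x - 1) (x + 2), g s ≤ 3 * A := by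
  have hsub : Set.Ioc (x - 1) (x + 2) ⊆ Set.Ioc (x - 1) (x - 1 + 1) ∪ (Set.Ioc x (x + 1) ∪ Set.Ioc (x + 1) (x + 1 + 1)) := by
    intro y hy
    simp only [Set.mem_union, Set.mem_Ioc] at hy ⊢
    by_cases h1 : y ≤ x
    · left; constructor <;> linarith
    · by_cases h2 : y ≤ x + 1
      · right; left; constructor <;> linarith
      · right; right; constructor <;> linarith
  calc _ ≤ ∫⁻ s in Set.Ioc (x - 1) (x - 1 + 1) ∪ (Set.Ioc x (x + 1) ∪ Set.Ioc (x + 1) (x + 1 + 1)), g s :=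
        lintegral_mono_set hsub
    _ ≤ A + (A + A) := (lintegral_union_le _ _ _).trans (add_le_add (hA _) ((lintegral_union_le _ _ _).trans (add_le_add (hA _) (hA _))))
    _ = 3 * A := by ring

lemma L1_le (p : ℝ) (hp : 1 < p) (f : ℝ → ℂ) (hf : Measurable f) (A : ENNReal)
    (hA : ∀ x, ∫⁻ s in Set.Ioc x (x + 1), ‖f s‖ₑ ^ p ≤ A) (x : ℝ) :
    ∫⁻ s in Set.Ioc x (x + 1), ‖f s‖ₑ ≤ A ^ (1 / p) := by
  have hpq := Real.HolderConjugate.conjExponent hp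
  have h := ENNReal.lintegral_mul_le_Lp_mul_Lq (volume.restrict (Set.Ioc x (x+1))) hpq (f := fun s => ‖f s‖ₑ) (g := fun _ => 1)
    hf.enorm.aemeasurable aemeasurable_const
  simp at h
  refine h.trans ?_
  rw [one_div]
  have : 0 < p := by linarith
  gcongr
  exact hA x

noncomputable def Wz : ENNReal := ∑' n : ℤ, ENNReal.ofReal (6 / (1 + (n:ℝ) ^ 2))

lemma Wz_ne_top : Wz ≠ ⊤ := by
  have hs : Summable (fun n : ℤ => 6 / (1 + (n:ℝ) ^ 2)) := by
    have h1 : Summable (fun n : ℤ => 6 * (1 / (n:ℝ) ^ 2)) := (Real.summable_one_div_int_pow.2 (by norm_num)).mul_left 6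
    refine Summable.of_norm_bounded_eventually h1 ?_
    have : ∀ᶠ n : ℤ in Filter.cofinite, n ≠ 0 := by
      rw [Filter.eventually_cofinite]; simp
    filter_upwards [this] with n hn
    have hn' : (0:ℝ) < (n:ℝ) ^ 2 := by positivity
    rw [Real.norm_of_nonneg (by positivity)]
    rw [mul_one_div]
    gcongr; linarith
  exact hs.tsum_ofReal_ne_top

lemma weight_le (g : ℝ → ENNReal) (hg : Measurable g) (a : ENNReal) (ha : ∀ x, ∫⁻ s in Set.Ioc x (x + 1), g s ≤ a) (s : ℝ) :
    ∫⁻ y, ENNReal.ofReal (2 / (1 + (s - y) ^ 2)) * g y ≤ Wz * a := by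
  have hU : (⋃ n : ℤ, Set.Ioc (s + n) (s + n + 1)) = Set.univ := iUnion_Ioc_add_intCast s
  rw [← setLIntegral_univ, ← hU]
  refine (lintegral_iUnion_le _ _).trans ?_
  rw [Wz, ← ENNReal.tsum_mul_right]
  refine ENNReal.tsum_le_tsum fun n => ?_
  calc _ ≤ ∫⁻ y in Set.Ioc (s + n) (s + n + 1), ENNReal.ofReal (6 / (1 + (n:ℝ) ^ 2)) * g y := by
        refine setLIntegral_mono' measurableSet_Ioc fun y hy => ?_
        gcongr ENNReal.ofReal ?_ * _
        obtain ⟨h1, h2⟩ := hy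
        rw [div_le_div_iff₀ (by positivity) (by positivity)]
        nlinarith [sq_nonneg (s - y), sq_nonneg ((n:ℝ) + (y - s)), mul_nonneg (sub_nonneg.2 h1.le) (sub_nonneg.2 h2)]
    _ = ENNReal.ofReal (6 / (1 + (n:ℝ) ^ 2)) * ∫⁻ y in Set.Ioc (s + n) (s + n + 1), g y := lintegral_const_mul _ hg
    _ ≤ _ := by gcongr; exact ha _

lemma far_le (ψ : SchwartzMap ℝ ℂ) : ∃ D : ENNReal, D ≠ ⊤ ∧ ∀ f : ℝ → ℂ, Measurable f → ∀ a : ENNReal,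
    (∀ x, ∫⁻ s in Set.Ioc x (x + 1), ‖f s‖ₑ ≤ a) → ∀ x, ∀ s ∈ Set.Ioc x (x + 1), ∀ k,
    ∫⁻ y, ‖dil ψ k (s - y)‖ₑ * ‖(Set.Ioc (x - 1) (x + 2))ᶜ.indicator f y‖ₑ ≤ (2⁻¹) ^ (k + 1) * (D * a) := by
  obtain ⟨D, hD⟩ := ψ.decay 2 0
  have hD0 := hD.1
  have hDb : ∀ x, x ^ 2 * ‖ψ x‖ ≤ D := fun x => by simpa using hD.2 x
  refine ⟨ENNReal.ofReal D * Wz, ENNReal.mul_ne_top ENNReal.ofReal_ne_top Wz_ne_top, fun f hf a ha x s hs k => ?_⟩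
  have hpt : ∀ y, ‖dil ψ k (s - y)‖ₑ * ‖(Set.Ioc (x - 1) (x + 2))ᶜ.indicator f y‖ₑ ≤
      ((2⁻¹) ^ (k + 1) * ENNReal.ofReal D) * (ENNReal.ofReal (2 / (1 + (s - y) ^ 2)) * ‖f y‖ₑ) := by
    intro y
    rw [Set.indicator_apply]
    split_ifs with hy
    swap
    · simp
    rw [← mul_assoc]
    gcongr ?_ * _
    have h1 : 1 ≤ (s - y) ^ 2 := by
      simp only [Set.mem_compl_iff, Set.mem_Ioc, not_and_or, not_lt, not_le] at hy
      obtain ⟨hs1, hs2⟩ := hs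
      rcases hy with hy | hy <;> nlinarith
    have e : ((2:ENNReal)⁻¹) ^ (k + 1) = ENNReal.ofReal ((2⁻¹) ^ (k + 1)) := by
      rw [ENNReal.ofReal_pow (by norm_num), ENNReal.ofReal_inv_of_pos (by norm_num)]; simp
    rw [e, ← ENNReal.ofReal_mul (by positivity), ← ENNReal.ofReal_mul (by positivity), ← ofReal_norm]
    apply ENNReal.ofReal_le_ofReal
    rw [dil_apply, norm_mul, Complex.norm_real, Real.norm_of_nonneg (by positivity)]
    have h2 := hDb (2 ^ (k + 1) * (s - y))
    set c : ℝ := 2 ^ (k + 1) with hc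
    have hc0 : 0 < c := by positivity
    have e2 : (2⁻¹ : ℝ) ^ (k + 1) = c⁻¹ := by rw [hc, inv_pow]
    rw [e2]
    set t := ‖ψ (c * (s - y))‖
    have ht : 0 ≤ t := norm_nonneg _
    rw [mul_div_assoc', le_div_iff₀ (by positivity)]
    have : c * t * (1 + (s - y) ^ 2) ≤ c⁻¹ * (2 * ((c * (s - y)) ^ 2 * t)) := by
      have e3 : c⁻¹ * (2 * ((c * (s - y)) ^ 2 * t)) = c * t * (2 * (s - y) ^ 2) := by field_simp
      rw [e3]; gcongr; linarith
    refine this.trans ?_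
    have : c⁻¹ * (2 * ((c * (s - y)) ^ 2 * t)) ≤ c⁻¹ * (2 * D) := by gcongr
    linarith
  refine (lintegral_mono hpt).trans ?_
  rw [lintegral_const_mul _ (by fun_prop), mul_assoc, mul_assoc]
  gcongr
  exact weight_le _ hf.enorm a ha s

lemma split_le (K : SchwartzMap ℝ ℂ) (f1 f2 : ℝ → ℂ) (h1 : Integrable f1) (h2 : Measurable f2) (s : ℝ) :
    ‖Tz K (fun y => f1 y + f2 y) s‖ₑ ≤ ‖Tz K f1 s‖ₑ + ∫⁻ y, ‖K (s - y)‖ₑ * ‖f2 y‖ₑ := by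
  by_cases h : ∫⁻ y, ‖K (s - y)‖ₑ * ‖f2 y‖ₑ = ⊤
  · rw [h]; simp
  have hm : Measurable (fun y => K (s - y) * f2 y) :=
    (K.continuous.measurable.comp (by fun_prop : Measurable fun y : ℝ => s - y)).mul h2
  have hi : Integrable (fun y => K (s - y) * f2 y) := by
    refine ⟨hm.aestronglyMeasurable, ?_⟩
    rw [HasFiniteIntegral]
    simp_rw [enorm_mul]
    exact lt_top_iff_ne_top.2 h
  have e : Tz K (fun y => f1 y + f2 y) s = Tz K f1 s + ∫ y, K (s - y) * f2 y := by
    rw [Tz, Tz, ← integral_add (Tz_integrable K h1 s) hi]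
    simp_rw [mul_add]
  rw [e]
  refine (enorm_add_le _ _).trans (add_le_add le_rfl ?_)
  refine (enorm_integral_le_lintegral_enorm _).trans (le_of_eq ?_)
  simp_rw [enorm_mul]

lemma tsum_geo (b : ENNReal) : ∑' k : ℕ, ((2⁻¹) ^ (k + 1) * b) ^ 2 ≤ b ^ 2 := by
  calc ∑' k : ℕ, ((2⁻¹) ^ (k + 1) * b) ^ 2 ≤ ∑' k : ℕ, (2⁻¹) ^ (k + 1) * b ^ 2 := by
        refine ENNReal.tsum_le_tsum fun k => ?_
        rw [mul_pow]
        refine mul_le_mul_left ?_ _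
        rw [pow_two]
        refine mul_le_of_le_one_left zero_le (pow_le_one₀ zero_le (by simp))
    _ = b ^ 2 := by
        rw [ENNReal.tsum_mul_right]
        have : ∑' k : ℕ, (2⁻¹ : ENNReal) ^ (k + 1) = 1 := by
          simp_rw [pow_succ]
          rw [ENNReal.tsum_mul_right, ENNReal.tsum_geometric, ENNReal.one_sub_inv_two, inv_inv]
          exact ENNReal.mul_inv_cancel (by simp) (by simp)
        rw [this, one_mul]

lemma main_bd (ψ : SchwartzMap ℝ ℂ) (h0 : ∫ x, ψ x = 0) (p : ℝ) (hp : 1 < p) :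
    ∃ C : ENNReal, C ≠ ⊤ ∧ ∀ f : ℝ → ℂ, Measurable f → ∀ A : ENNReal, A ≠ ⊤ →
      (∀ x, ∫⁻ s in Set.Ioc x (x + 1), ‖f s‖ₑ ^ p ≤ A) → ∀ x,
      ∫⁻ s in Set.Ioc x (x + 1), (∑' k, ‖Tz (dil ψ k) f s‖ₑ ^ 2) ^ (p / 2) ≤ C * A := by
  have hp0 : 0 < p := by linarith
  obtain ⟨C, hC, H⟩ := sq_fun ψ h0 p hp
  obtain ⟨D, hD, HD⟩ := far_le ψ
  refine ⟨2 ^ (p / 2) * (2 ^ (p / 2) * (C * 3 + D ^ p)), ?_, fun f hf A hA hfA x => ?_⟩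
  · have h2 : (2:ENNReal) ^ (p / 2) ≠ ⊤ := ENNReal.rpow_ne_top_of_nonneg (by linarith) (by simp)
    exact ENNReal.mul_ne_top h2 (ENNReal.mul_ne_top h2 (ENNReal.add_ne_top.2
      ⟨ENNReal.mul_ne_top hC (by simp), ENNReal.rpow_ne_top_of_nonneg hp0.le hD⟩))
  have hL1 := L1_le p hp f hf A hfA
  set a := A ^ (1 / p) with ha
  have hatop : a ≠ ⊤ := ENNReal.rpow_ne_top_of_nonneg (by positivity) hA
  set J := Set.Ioc (x - 1) (x + 2) with hJ
  have hJm : MeasurableSet J := measurableSet_Ioc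
  set f1 := J.indicator f with hf1
  set f2 := Jᶜ.indicator f with hf2
  have hf1m : Measurable f1 := hf.indicator hJm
  have hf2m : Measurable f2 := hf.indicator hJm.compl
  have hff : f = fun y => f1 y + f2 y := by
    ext y; rw [hf1, hf2]
    exact (congrFun (Set.indicator_self_add_compl J f) y).symm
  have hf1i : Integrable f1 := by
    refine ⟨hf1m.aestronglyMeasurable, ?_⟩
    rw [HasFiniteIntegral]
    simp_rw [hf1, enorm_indicator_eq_indicator_enorm]
    rw [lintegral_indicator hJm]
    exact (three_cover _ a hL1 x).trans_lt (ENNReal.mul_lt_top (by simp) (lt_top_iff_ne_top.2 hatop))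
  have hf1p : ∫⁻ y, ‖f1 y‖ₑ ^ p ≤ 3 * A := by
    have : ∀ y, ‖f1 y‖ₑ ^ p = J.indicator (fun y => ‖f y‖ₑ ^ p) y := by
      intro y
      rw [hf1, Set.indicator_apply, Set.indicator_apply]
      split_ifs <;> simp [hp0]
    simp_rw [this]
    rw [lintegral_indicator hJm]
    exact three_cover _ A hfA x
  have hm : ∀ k, Measurable (Tz (dil ψ k) f1) := fun k => Tz_measurable _ hf1m
  have hpt : ∀ s ∈ Set.Ioc x (x + 1), (∑' k, ‖Tz (dil ψ k) f s‖ₑ ^ 2) ^ (p / 2) ≤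
      2 ^ (p / 2) * (2 ^ (p / 2) * ((∑' k, ‖Tz (dil ψ k) f1 s‖ₑ ^ 2) ^ (p / 2) + D ^ p * A)) := by
    intro s hs
    have e1 : ((D * a) ^ 2) ^ (p / 2) = D ^ p * A := by
      rw [← ENNReal.rpow_natCast, ← ENNReal.rpow_mul]
      have : ((2:ℕ):ℝ) * (p / 2) = p := by push_cast; ring
      rw [this, ENNReal.mul_rpow_of_nonneg _ _ hp0.le, ha, ← ENNReal.rpow_mul]
      have : 1 / p * p = 1 := by field_simp
      rw [this, ENNReal.rpow_one]
    have h1 : ∑' k, ‖Tz (dil ψ k) f s‖ₑ ^ 2 ≤ 2 * (∑' k, ‖Tz (dil ψ k) f1 s‖ₑ ^ 2 + (D * a) ^ 2) := by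
      calc _ ≤ ∑' k, 2 * (‖Tz (dil ψ k) f1 s‖ₑ ^ 2 + ((2⁻¹) ^ (k + 1) * (D * a)) ^ 2) := by
            refine ENNReal.tsum_le_tsum fun k => ?_
            have hk : ‖Tz (dil ψ k) f s‖ₑ ≤ ‖Tz (dil ψ k) f1 s‖ₑ + (2⁻¹) ^ (k + 1) * (D * a) := by
              conv_lhs => rw [hff]
              exact (split_le _ f1 f2 hf1i hf2m s).trans (add_le_add le_rfl (HD f hf a hL1 x s hs k))
            refine (pow_le_pow_left₀ zero_le hk 2).trans ?_
            have := ENNReal.rpow_add_le_mul_rpow_add_rpow ‖Tz (dil ψ k) f1 s‖ₑ ((2⁻¹) ^ (k + 1) * (D * a)) (p := 2) (by norm_num)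
            have e2 : (2:ℝ) - 1 = 1 := by norm_num
            simpa only [e2, ENNReal.rpow_one, ENNReal.rpow_two] using this
        _ = 2 * (∑' k, ‖Tz (dil ψ k) f1 s‖ₑ ^ 2 + ∑' k : ℕ, ((2⁻¹) ^ (k + 1) * (D * a)) ^ 2) := by
            rw [ENNReal.tsum_mul_left, ENNReal.tsum_add]
        _ ≤ _ := by
            gcongr
            exact tsum_geo _
    refine (ENNReal.rpow_le_rpow h1 (by positivity)).trans ?_
    rw [ENNReal.mul_rpow_of_nonneg _ _ (by positivity), ← e1]
    gcongr
    exact enn_add_rpow _ _ _ (by positivity)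
  calc _ ≤ ∫⁻ s in Set.Ioc x (x + 1), 2 ^ (p / 2) * (2 ^ (p / 2) * ((∑' k, ‖Tz (dil ψ k) f1 s‖ₑ ^ 2) ^ (p / 2) + D ^ p * A)) :=
        setLIntegral_mono' measurableSet_Ioc hpt
    _ = 2 ^ (p / 2) * (2 ^ (p / 2) * ((∫⁻ s in Set.Ioc x (x + 1), (∑' k, ‖Tz (dil ψ k) f1 s‖ₑ ^ 2) ^ (p / 2)) + D ^ p * A)) := by
        have hmm : Measurable (fun s => (∑' k, ‖Tz (dil ψ k) f1 s‖ₑ ^ 2) ^ (p / 2)) :=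
          (Measurable.ennreal_tsum fun k => (hm k).enorm.pow_const 2).pow_const _
        rw [lintegral_const_mul _ (by fun_prop), lintegral_const_mul _ (by fun_prop), lintegral_add_left hmm]
        simp
    _ ≤ 2 ^ (p / 2) * (2 ^ (p / 2) * (C * (3 * A) + D ^ p * A)) := by
        gcongr
        refine (H f1 hf1m hf1i ?_ x).trans ?_
        · exact ne_top_of_le_ne_top (ENNReal.mul_ne_top (by simp) hA) hf1p
        · gcongr
    _ = _ := by ring

/-- Littlewood–Paley theorem for Stepanov norms: if `ψ` is Schwartz with `ψ̂(0) = 0` and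
`ψ_k = 2^k ψ(2^k ·)`, then for `p ∈ (1, ∞)` there is `C = C(p, ψ) > 0` such that
`‖(Σ_{k≥1} |f ∗ ψ_k|²)^{1/2}‖_{S^p} ≤ C ‖f‖_{S^p}` for all measurable `f` with finite
Stepanov norm. -/
theorem stmt_11 (p : ℝ) (hp : 1 < p) (ψ : SchwartzMap ℝ ℂ)
    (hψ0 : (∫ t : ℝ, ψ t) = 0) :
    ∃ C : ℝ, 0 < C ∧ ∀ f : ℝ → ℂ, Measurable f → stepanov p f < ⊤ →
      (⨆ x : ℝ, ∫⁻ s in Set.Ioc x (x + 1),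
          (∑' k : ℕ,
            ((‖∫ y : ℝ, f (s - y) * (((2 : ℝ) ^ (k + 1) : ℝ) : ℂ)
                * ψ ((2 : ℝ) ^ (k + 1) * y)‖₊ : ENNReal)) ^ 2) ^ (p / 2)) ^ (1 / p)
        ≤ ENNReal.ofReal C * stepanov p f := by
  have hp0 : 0 < p := by linarith
  obtain ⟨C, hC, H⟩ := main_bd ψ hψ0 p hp
  have hC1 : C ^ (1 / p) ≠ ⊤ := ENNReal.rpow_ne_top_of_nonneg (by positivity) hC
  refine ⟨(C ^ (1 / p)).toReal + 1, by positivity, fun f hf hfin => ?_⟩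
  have hT : ∀ k s, ∫ y : ℝ, f (s - y) * (((2 : ℝ) ^ (k + 1) : ℝ) : ℂ) * ψ ((2 : ℝ) ^ (k + 1) * y) =
      Tz (dil ψ k) f s := by
    intro k s
    rw [Tz, ← integral_sub_left_eq_self (fun y => dil ψ k (s - y) * f y) volume s]
    congr 1; ext y
    rw [dil_apply, sub_sub_cancel]; ring
  simp_rw [hT]
  unfold stepanov at hfin ⊢
  set A := ⨆ x : ℝ, ∫⁻ s in Set.Ioc x (x + 1), (‖f s‖₊ : ENNReal) ^ p with hA
  have hAtop : A ≠ ⊤ := by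
    intro h
    rw [h, ENNReal.top_rpow_of_pos (by positivity)] at hfin
    exact lt_irrefl _ hfin
  have h1 := H f hf A hAtop (fun x => le_iSup (fun x => ∫⁻ s in Set.Ioc x (x + 1), (‖f s‖₊ : ENNReal) ^ p) x)
  calc _ ≤ (C * A) ^ (1 / p) := ENNReal.rpow_le_rpow (iSup_le h1) (by positivity)
    _ = C ^ (1 / p) * A ^ (1 / p) := ENNReal.mul_rpow_of_nonneg _ _ (by positivity)
    _ ≤ _ := by
        gcongr
        rw [← ENNReal.ofReal_toReal hC1, ENNReal.toReal_ofReal (by positivity)]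
        exact ENNReal.ofReal_le_ofReal (by linarith)
end

section
/- Let p ∈ (1, ∞) and let φ : ℝ → ℂ be a Schwartz function. For k ∈ ℕ (k ≥ 1) set φ_k := 2^k φ(2^k ·). Then there exists a constant C = C(p, φ) > 0 such that for every measurable function f : ℝ → ℂ with ‖f‖_{S^p} < ∞, ‖sup_{k ≥ 1} |f ∗ φ_k|‖_{S^p} ≤ C ‖f‖_{S^p}, where (f ∗ φ_k)(x) := ∫_ℝ f(x − y) φ_k(y) dy. -/
open MeasureTheory

open Metric Set ENNReal

noncomputable def MM (g : ℝ → ℝ≥0∞) (s : ℝ) : ℝ≥0∞ :=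
  ⨆ m : ℤ, (ENNReal.ofReal (2 * (2:ℝ)^m))⁻¹ * ∫⁻ y in closedBall s ((2:ℝ)^m), g y

lemma ofR_ne (m : ℤ) : ENNReal.ofReal (2 * (2:ℝ)^m) ≠ 0 := by
  simp only [ne_eq, ENNReal.ofReal_eq_zero, not_le]; positivity

lemma avg_le (g : ℝ → ℝ≥0∞) (s : ℝ) (m : ℤ) :
    ∫⁻ y in closedBall s ((2:ℝ)^m), g y ≤ ENNReal.ofReal (2 * (2:ℝ)^m) * MM g s := by
  have : (ENNReal.ofReal (2 * (2:ℝ)^m))⁻¹ * ∫⁻ y in closedBall s ((2:ℝ)^m), g y ≤ MM g s :=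
    le_iSup (fun m : ℤ => (ENNReal.ofReal (2 * (2:ℝ)^m))⁻¹ * ∫⁻ y in closedBall s ((2:ℝ)^m), g y) m
  rwa [← ENNReal.div_eq_inv_mul, ENNReal.div_le_iff' (ofR_ne m) ENNReal.ofReal_ne_top] at this

lemma MM_le (g : ℝ → ℝ≥0∞) (s : ℝ) (c : ℝ≥0∞)
    (h : ∀ m : ℤ, ∫⁻ y in closedBall s ((2:ℝ)^m), g y ≤ ENNReal.ofReal (2 * (2:ℝ)^m) * c) :
    MM g s ≤ c := by
  refine iSup_le fun m => ?_
  rw [← ENNReal.div_eq_inv_mul, ENNReal.div_le_iff' (ofR_ne m) ENNReal.ofReal_ne_top]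
  exact h m

lemma meas_MM {g : ℝ → ℝ≥0∞} (hg : Measurable g) : Measurable (MM g) := by
  refine Measurable.iSup fun m => Measurable.const_mul ?_ _
  have : (fun s : ℝ => ∫⁻ y in closedBall s ((2:ℝ)^m), g y) =
      fun s => ∫⁻ y, ({z : ℝ × ℝ | dist z.2 z.1 ≤ (2:ℝ)^m}.indicator (fun z => g z.2)) (s, y) := by
    ext s
    rw [← lintegral_indicator measurableSet_closedBall]
    rfl
  rw [this]
  refine Measurable.lintegral_prod_right' ?_
  exact (hg.comp measurable_snd).indicator
    (measurableSet_le (measurable_snd.dist measurable_fst) measurable_const)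

lemma weak (h : ℝ → ℝ≥0∞) (t : ℝ≥0∞) (ht : t ≠ 0) (ht' : t ≠ ⊤) :
    t * volume {s | t < MM h s} ≤ 5 * ∫⁻ y, h y := by
  by_cases hI : ∫⁻ y, h y = ⊤
  · rw [hI]; simp
  have h1 : ∀ s, ∃ m : ℤ, t < MM h s →
      t * ENNReal.ofReal (2 * (2:ℝ)^m) ≤ ∫⁻ y in closedBall s ((2:ℝ)^m), h y := by
    intro s
    by_cases hs : t < MM h s
    · obtain ⟨m, hm⟩ := lt_iSup_iff.1 hs
      refine ⟨m, fun _ => ?_⟩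
      rw [← ENNReal.div_eq_inv_mul] at hm
      exact (ENNReal.le_div_iff_mul_le (Or.inl (ofR_ne m)) (Or.inl ENNReal.ofReal_ne_top)).1 hm.le
    · exact ⟨0, fun h => absurd h hs⟩
  choose m hm using h1
  have hR : ∀ a ∈ {s | t < MM h s}, (2:ℝ)^(m a) ≤ ((∫⁻ y, h y) / t).toReal := by
    intro a ha
    have h2 := (hm a ha).trans (setLIntegral_le_lintegral _ _)
    have h3 : ENNReal.ofReal (2 * (2:ℝ)^(m a)) ≤ (∫⁻ y, h y) / t :=
      (ENNReal.le_div_iff_mul_le (Or.inl ht) (Or.inl ht')).2 (by rwa [mul_comm])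
    have h4 := (ENNReal.ofReal_le_iff_le_toReal (ENNReal.div_ne_top hI ht)).1 h3
    have : (0:ℝ) < 2 ^ (m a) := by positivity
    linarith
  obtain ⟨u, hu, hd, hc⟩ := Vitali.exists_disjoint_subfamily_covering_enlargement_closedBall
    {s | t < MM h s} (fun s => s) (fun s => (2:ℝ)^(m s)) _ hR 5 (by norm_num)
  have hcount : u.Countable := hd.countable_of_nonempty_interior (by
    intro i _
    exact ⟨i, ball_subset_interior_closedBall (mem_ball_self (by positivity))⟩)
  have : Countable u := hcount.to_subtype
  have hcov : {s | t < MM h s} ⊆ ⋃ a : u, closedBall (a:ℝ) (5 * (2:ℝ)^(m a)) := by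
    intro s hs
    obtain ⟨b, hb, hsub⟩ := hc s hs
    exact mem_iUnion.2 ⟨⟨b, hb⟩, hsub (mem_closedBall_self (by positivity))⟩
  calc t * volume {s | t < MM h s}
      ≤ t * ∑' a : u, volume (closedBall (a:ℝ) (5 * (2:ℝ)^(m a))) := by
        gcongr
        exact (measure_mono hcov).trans (measure_iUnion_le _)
    _ = ∑' a : u, 5 * (t * ENNReal.ofReal (2 * (2:ℝ)^(m a))) := by
        rw [← ENNReal.tsum_mul_left]
        congr 1; ext a
        rw [Real.volume_closedBall, show 2 * (5 * (2:ℝ)^(m a)) = 5 * (2 * (2:ℝ)^(m a)) by ring,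
          ENNReal.ofReal_mul (by norm_num)]
        simp only [ENNReal.ofReal_ofNat]
        ring
    _ ≤ ∑' a : u, 5 * ∫⁻ y in closedBall (a:ℝ) ((2:ℝ)^(m a)), h y := by
        gcongr with a
        exact hm a (hu a.2)
    _ = 5 * ∫⁻ y in ⋃ a ∈ u, closedBall (a:ℝ) ((2:ℝ)^(m a)), h y := by
        rw [ENNReal.tsum_mul_left, lintegral_biUnion hcount (fun _ _ => measurableSet_closedBall) hd]
    _ ≤ 5 * ∫⁻ y, h y := by
        exact mul_le_mul_right (setLIntegral_le_lintegral _ _) _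

lemma layer_fin (q : ℝ) (hq : 0 < q) (t : ℝ) (ht : 0 ≤ t) :
    ∫⁻ l in Ioi (0:ℝ), (if ENNReal.ofReal l < ENNReal.ofReal t then ENNReal.ofReal (l ^ (q-1)) else 0)
      = ENNReal.ofReal t ^ q / ENNReal.ofReal q := by
  have h1 : ∀ l ∈ Ioi (0:ℝ),
      (if ENNReal.ofReal l < ENNReal.ofReal t then ENNReal.ofReal (l ^ (q-1)) else 0)
      = (Iio t).indicator (fun l => ENNReal.ofReal (l ^ (q-1))) l := by
    intro l hl
    rw [indicator_apply]
    simp only [ENNReal.ofReal_lt_ofReal_iff_of_nonneg (le_of_lt hl), mem_Iio]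
  rw [setLIntegral_congr_fun measurableSet_Ioi h1, lintegral_indicator measurableSet_Iio,
    Measure.restrict_restrict measurableSet_Iio, inter_comm, Ioi_inter_Iio,
    Measure.restrict_congr_set (Ioo_ae_eq_Ioc (a := (0:ℝ)) (b := t))]
  have hint : IntegrableOn (fun l : ℝ => l ^ (q-1)) (Ioc 0 t) :=
    (intervalIntegrable_iff_integrableOn_Ioc_of_le ht).1
      (intervalIntegral.intervalIntegrable_rpow' (by linarith))
  rw [← ofReal_integral_eq_lintegral_ofReal hint
    ((ae_restrict_iff' measurableSet_Ioc).2 (Filter.Eventually.of_forall fun l hl =>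
      Real.rpow_nonneg hl.1.le _)),
    ← intervalIntegral.integral_of_le ht, integral_rpow (Or.inl (by linarith)),
    sub_add_cancel, Real.zero_rpow hq.ne', sub_zero, ENNReal.ofReal_div_of_pos hq,
    ENNReal.ofReal_rpow_of_nonneg ht hq.le]

lemma layer (q : ℝ) (hq : 0 < q) (t : ℝ≥0∞) :
    ∫⁻ l in Ioi (0:ℝ), (if ENNReal.ofReal l < t then ENNReal.ofReal (l ^ (q-1)) else 0)
      = t ^ q / ENNReal.ofReal q := by
  by_cases ht : t = ⊤
  · subst ht
    rw [ENNReal.top_rpow_of_pos hq, ENNReal.top_div_of_ne_top ENNReal.ofReal_ne_top]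
    refine ENNReal.eq_top_of_forall_nnreal_le fun r => ?_
    have := layer_fin q hq ((r * q) ^ (1/q)) (by positivity)
    rw [ENNReal.ofReal_rpow_of_nonneg (by positivity) hq.le, ← Real.rpow_mul (by positivity),
      one_div_mul_cancel hq.ne', Real.rpow_one, ← ENNReal.ofReal_div_of_pos hq,
      mul_div_cancel_right₀ _ hq.ne', ENNReal.ofReal_coe_nnreal] at this
    rw [← this]
    refine lintegral_mono fun l => ?_
    split_ifs <;> simp_all
  · have := layer_fin q hq t.toReal ENNReal.toReal_nonneg
    rwa [ENNReal.ofReal_toReal ht] at this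

lemma strong (p : ℝ) (hp : 1 < p) (g : ℝ → ℝ≥0∞) (hg : Measurable g) :
    ∫⁻ s, MM g s ^ p ≤ ENNReal.ofReal (10 * p * 2 ^ (p-1) / (p-1)) * ∫⁻ y, g y ^ p := by
  have hp0 : 0 < p := by linarith
  have hp1 : 0 < p - 1 := by linarith
  have hM := meas_MM hg
  have hpt : ∀ l ∈ Ioi (0:ℝ), volume {s | ENNReal.ofReal l < MM g s} * ENNReal.ofReal (l ^ (p-1))
      ≤ ∫⁻ x, 10 * (g x * if ENNReal.ofReal l < 2 * g x then ENNReal.ofReal (l ^ (p-1-1)) else 0) := by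
    intro l hl
    have hl : 0 < l := hl
    set gl : ℝ → ℝ≥0∞ := fun x => if ENNReal.ofReal l < 2 * g x then g x else 0 with hgl
    have hhalf : ENNReal.ofReal l = ENNReal.ofReal (l/2) + ENNReal.ofReal (l/2) := by
      rw [← ENNReal.ofReal_add (by positivity) (by positivity)]; congr 1; ring
    have hle : ∀ x, g x ≤ gl x + ENNReal.ofReal (l/2) := by
      intro x
      simp only [hgl]
      split_ifs with hx
      · exact le_self_add
      · rw [not_lt, hhalf, ← two_mul] at hx
        rw [zero_add]
        exact (ENNReal.mul_le_mul_iff_right (by norm_num) (by norm_num)).1 hx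
    have hMle : ∀ s, MM g s ≤ MM gl s + ENNReal.ofReal (l/2) := by
      intro s
      refine MM_le _ _ _ fun m => ?_
      calc ∫⁻ y in closedBall s ((2:ℝ)^m), g y
          ≤ ∫⁻ y in closedBall s ((2:ℝ)^m), (gl y + ENNReal.ofReal (l/2)) := lintegral_mono hle
        _ = (∫⁻ y in closedBall s ((2:ℝ)^m), gl y) + ENNReal.ofReal (l/2) * ENNReal.ofReal (2 * (2:ℝ)^m) := by
          rw [lintegral_add_right _ measurable_const, setLIntegral_const, Real.volume_closedBall]
        _ ≤ _ := by
          rw [mul_add, mul_comm (ENNReal.ofReal (l/2))]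
          gcongr
          exact avg_le _ _ _
    have hsub : {s | ENNReal.ofReal l < MM g s} ⊆ {s | ENNReal.ofReal (l/2) < MM gl s} := by
      intro s hs
      have : ENNReal.ofReal l < MM gl s + ENNReal.ofReal (l/2) := lt_of_lt_of_le hs (hMle s)
      rw [hhalf] at this
      exact lt_of_add_lt_add_right this
    have hw := weak gl (ENNReal.ofReal (l/2)) (by simpa using hl) ENNReal.ofReal_ne_top
    have hid : ENNReal.ofReal (l^(p-1)) = ENNReal.ofReal (l/2) * (2 * ENNReal.ofReal (l^(p-1-1))) := by
      rw [show (2:ℝ≥0∞) = ENNReal.ofReal 2 by simp, ← ENNReal.ofReal_mul (by norm_num),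
        ← ENNReal.ofReal_mul (by positivity)]
      congr 1
      rw [Real.rpow_sub_one hl.ne' (p-1)]
      field_simp
    calc volume {s | ENNReal.ofReal l < MM g s} * ENNReal.ofReal (l ^ (p-1))
        ≤ volume {s | ENNReal.ofReal (l/2) < MM gl s} * ENNReal.ofReal (l ^ (p-1)) := by
          gcongr
      _ = (ENNReal.ofReal (l/2) * volume {s | ENNReal.ofReal (l/2) < MM gl s})
            * (2 * ENNReal.ofReal (l^(p-1-1))) := by rw [hid]; ring
      _ ≤ (5 * ∫⁻ y, gl y) * (2 * ENNReal.ofReal (l^(p-1-1))) := by gcongr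
      _ = (10 * ENNReal.ofReal (l^(p-1-1))) * ∫⁻ y, gl y := by
          rw [show (10:ℝ≥0∞) = 5 * 2 by norm_num]; ring
      _ = _ := by
          rw [← lintegral_const_mul']
          · congr 1; ext x
            simp only [hgl]
            split_ifs <;> ring
          · exact ENNReal.mul_ne_top (by norm_num) ENNReal.ofReal_ne_top
  have e1 : ∫⁻ s, MM g s ^ p = ENNReal.ofReal p * ∫⁻ s, ∫⁻ l in Ioi (0:ℝ),
      (if ENNReal.ofReal l < MM g s then ENNReal.ofReal (l ^ (p-1)) else 0) := by
    rw [← lintegral_const_mul' _ _ ENNReal.ofReal_ne_top]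
    congr 1; ext s
    rw [layer p hp0, ENNReal.mul_div_cancel (by simpa using hp0) ENNReal.ofReal_ne_top]
  rw [e1, lintegral_lintegral_swap]
  swap
  · refine Measurable.aemeasurable (Measurable.ite ?_ ?_ measurable_const)
    · exact measurableSet_lt (by fun_prop) (hM.comp measurable_fst)
    · fun_prop
  have e2 : ∫⁻ l in Ioi (0:ℝ), ∫⁻ s, (if ENNReal.ofReal l < MM g s then ENNReal.ofReal (l ^ (p-1)) else 0)
     ≤ ∫⁻ l in Ioi (0:ℝ), ∫⁻ x, 10 * (g x * if ENNReal.ofReal l < 2 * g x then ENNReal.ofReal (l ^ (p-1-1)) else 0) := by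
    refine setLIntegral_mono' measurableSet_Ioi fun l hl => ?_
    refine le_trans (le_of_eq ?_) (hpt l hl)
    rw [mul_comm, ← lintegral_indicator_const (measurableSet_lt measurable_const hM)]
    congr 1; ext s
    simp only [indicator_apply, mem_ofPred_eq]
  have e2' : ∫⁻ l in Ioi (0:ℝ), ∫⁻ x, 10 * (g x * if ENNReal.ofReal l < 2 * g x then ENNReal.ofReal (l ^ (p-1-1)) else 0)
     = ∫⁻ x, ∫⁻ l in Ioi (0:ℝ), 10 * (g x * if ENNReal.ofReal l < 2 * g x then ENNReal.ofReal (l ^ (p-1-1)) else 0) := by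
    apply lintegral_lintegral_swap
    refine Measurable.aemeasurable (Measurable.const_mul (Measurable.mul (hg.comp measurable_snd) (Measurable.ite ?_ ?_ measurable_const)) _)
    · exact measurableSet_lt (by fun_prop) (by fun_prop)
    · fun_prop
  rw [e2'] at e2
  have e3 : ∀ x, ∫⁻ l in Ioi (0:ℝ), 10 * (g x * if ENNReal.ofReal l < 2 * g x then ENNReal.ofReal (l ^ (p-1-1)) else 0)
      = ENNReal.ofReal (10 * 2 ^ (p-1) / (p-1)) * g x ^ p := by
    intro x
    have hm : Measurable fun l : ℝ => if ENNReal.ofReal l < 2 * g x then ENNReal.ofReal (l ^ (p-1-1)) else 0 :=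
      Measurable.ite (measurableSet_lt (by fun_prop) (by fun_prop)) (by fun_prop) measurable_const
    rw [lintegral_const_mul _ (hm.const_mul _), lintegral_const_mul _ hm, layer (p-1) hp1,
      ENNReal.mul_rpow_of_nonneg _ _ hp1.le, ENNReal.ofReal_div_of_pos hp1,
      ENNReal.ofReal_mul (by norm_num), ← ENNReal.ofReal_rpow_of_pos (by norm_num)]
    have : g x ^ p = g x * g x ^ (p-1) := by
      conv_rhs => rw [← ENNReal.rpow_one (g x), ← ENNReal.rpow_mul, one_mul,
        ← ENNReal.rpow_add_of_nonneg _ _ zero_le_one hp1.le]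
      congr 1; ring
    rw [this]
    simp only [div_eq_mul_inv, ENNReal.ofReal_ofNat]
    ring
  simp only [e3] at e2
  rw [lintegral_const_mul' _ _ ENNReal.ofReal_ne_top] at e2
  calc _ ≤ ENNReal.ofReal p * (ENNReal.ofReal (10 * 2 ^ (p-1) / (p-1)) * ∫⁻ y, g y ^ p) := by gcongr
    _ = _ := by
      rw [← mul_assoc, ← ENNReal.ofReal_mul hp0.le]
      congr 2; ring

lemma schw_bound (φ : SchwartzMap ℝ ℂ) : ∃ D : ℝ, 0 < D ∧ ∀ x, ‖φ x‖ₑ ≤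
    ∑' j : ℕ, ENNReal.ofReal (D * (1/4)^j) * (closedBall (0:ℝ) (2^j)).indicator 1 x := by
  obtain ⟨A, hA, hA'⟩ := φ.decay 0 0
  obtain ⟨B, hB, hB'⟩ := φ.decay 2 0
  simp only [norm_iteratedFDeriv_zero, pow_zero, one_mul] at hA' hB'
  refine ⟨A + 4 * B, by positivity, fun x => ?_⟩
  obtain ⟨j, hj, hj'⟩ : ∃ j : ℕ, |x| ≤ 2^j ∧ ‖φ x‖ ≤ (A + 4 * B) * (1/4)^j := by
    by_cases hx : |x| < 1
    · exact ⟨0, by simpa using hx.le, by have := hA' x; simp; linarith⟩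
    · obtain ⟨n, hn, hn'⟩ := exists_nat_pow_near (not_lt.1 hx) (one_lt_two)
      refine ⟨n+1, hn'.le, ?_⟩
      have h1 := hB' x
      rw [Real.norm_eq_abs] at h1
      have h2 : ((4:ℝ)^n) ≤ |x|^2 := by
        calc (4:ℝ)^n = (2^n)^2 := by rw [← pow_mul, mul_comm, pow_mul]; norm_num
          _ ≤ _ := by gcongr
      have h3 : (4:ℝ)^n * ‖φ x‖ ≤ B := le_trans (by gcongr) h1
      have h4 : ‖φ x‖ ≤ B * (1/4)^n := by
        rw [one_div, inv_pow, ← div_eq_mul_inv, le_div_iff₀ (by positivity)]; linarith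
      calc ‖φ x‖ ≤ B * (1/4)^n := h4
        _ = (4 * B) * (1/4)^(n+1) := by ring
        _ ≤ _ := by gcongr; linarith
  refine le_trans ?_ (ENNReal.le_tsum j)
  rw [indicator_of_mem (by simpa using hj), Pi.one_apply, mul_one, ← ofReal_norm]
  exact ENNReal.ofReal_le_ofReal hj'

lemma conv_bound (φ : SchwartzMap ℝ ℂ) : ∃ D : ℝ, 0 < D ∧ ∀ f : ℝ → ℂ, Measurable f → ∀ (s : ℝ) (k : ℕ),
    (‖∫ y : ℝ, f (s - y) * (((2 : ℝ) ^ (k + 1) : ℝ) : ℂ)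
                * φ ((2 : ℝ) ^ (k + 1) * y)‖₊ : ENNReal) ≤ ENNReal.ofReal D * MM (fun x => ‖f x‖ₑ) s := by
  obtain ⟨D, hD, hb⟩ := schw_bound φ
  refine ⟨4 * D, by positivity, fun f hf s k => ?_⟩
  have hfe : Measurable fun y => ‖f (s - y)‖ₑ := (hf.comp (measurable_const.sub measurable_id)).enorm
  set P : ℝ := 2 ^ (k+1) with hP
  have hPpos : 0 < P := by positivity
  have hi : ∀ j : ℕ, ∀ y, (closedBall (0:ℝ) (2^j)).indicator (1 : ℝ → ℝ≥0∞) (P * y) * ‖f (s - y)‖ₑ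
      = (closedBall s ((2:ℝ)^((j:ℤ) - (k+1:ℕ)))).indicator (fun x => ‖f x‖ₑ) (s - y) := by
    intro j y
    have : P * y ∈ closedBall (0:ℝ) (2^j) ↔ s - y ∈ closedBall s ((2:ℝ)^((j:ℤ) - (k+1:ℕ))) := by
      rw [mem_closedBall, mem_closedBall, Real.dist_eq, Real.dist_eq, sub_zero, abs_mul,
        abs_of_pos hPpos, sub_sub_cancel_left, abs_neg, zpow_sub₀ two_ne_zero, zpow_natCast,
        zpow_natCast, le_div_iff₀ hPpos, mul_comm]
    by_cases hy : P * y ∈ closedBall (0:ℝ) (2^j)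
    · rw [indicator_of_mem hy, indicator_of_mem (this.1 hy), Pi.one_apply, one_mul]
    · rw [indicator_of_notMem hy, indicator_of_notMem (fun h => hy (this.2 h)), zero_mul]
  calc (‖∫ y : ℝ, f (s - y) * (P : ℂ) * φ (P * y)‖₊ : ENNReal)
      ≤ ∫⁻ y, ‖f (s - y) * (P : ℂ) * φ (P * y)‖ₑ := enorm_integral_le_lintegral_enorm _
    _ ≤ ∫⁻ y, ∑' j : ℕ, ENNReal.ofReal (P * (D * (1/4)^j)) *
          ((closedBall s ((2:ℝ)^((j:ℤ) - (k+1:ℕ)))).indicator (fun x => ‖f x‖ₑ) (s - y)) := by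
        refine lintegral_mono fun y => ?_
        simp only [← hi]
        rw [enorm_mul, enorm_mul]
        have e : ‖(P:ℂ)‖ₑ = ENNReal.ofReal P := by
          rw [← ofReal_norm, Complex.norm_real, Real.norm_of_nonneg hPpos.le]
        rw [e]
        refine (mul_le_mul_right (hb (P * y)) _).trans (le_of_eq ?_)
        rw [← ENNReal.tsum_mul_left]
        congr 1; ext j
        rw [ENNReal.ofReal_mul hPpos.le]
        ring
    _ = ∑' j : ℕ, ENNReal.ofReal (P * (D * (1/4)^j)) *
          ∫⁻ y in closedBall s ((2:ℝ)^((j:ℤ) - (k+1:ℕ))), ‖f y‖ₑ := by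
        rw [lintegral_tsum]
        · congr 1; ext j
          rw [lintegral_const_mul' _ _ ENNReal.ofReal_ne_top,
            lintegral_sub_left_eq_self
              (fun z => (closedBall s ((2:ℝ)^((j:ℤ) - (k+1:ℕ)))).indicator (fun x => ‖f x‖ₑ) z) s,
            lintegral_indicator measurableSet_closedBall]
        · intro j
          refine Measurable.aemeasurable (Measurable.const_mul ?_ _)
          exact (hf.enorm.indicator measurableSet_closedBall).comp (measurable_const.sub measurable_id)
    _ ≤ ∑' j : ℕ, ENNReal.ofReal (P * (D * (1/4)^j)) *
          (ENNReal.ofReal (2 * (2:ℝ)^((j:ℤ) - (k+1:ℕ))) * MM (fun x => ‖f x‖ₑ) s) := by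
        gcongr with j
        exact avg_le _ _ _
    _ = ∑' j : ℕ, ENNReal.ofReal (2 * D * (1/2)^j) * MM (fun x => ‖f x‖ₑ) s := by
        congr 1; ext j
        rw [← mul_assoc, ← ENNReal.ofReal_mul (by positivity)]
        congr 2
        rw [zpow_sub₀ two_ne_zero, zpow_natCast, zpow_natCast, ← hP,
          show (1/4:ℝ)^j = (1/2)^j * (1/2)^j by rw [← mul_pow]; norm_num]
        have : (1/2:ℝ)^j * 2^j = 1 := by rw [← mul_pow]; norm_num
        field_simp
        exact this
    _ = _ := by
        rw [ENNReal.tsum_mul_right, ← ENNReal.ofReal_tsum_of_nonneg (fun j => by positivity)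
          (summable_geometric_two.mul_left _), tsum_mul_left, tsum_geometric_two]
        congr 2; ring

lemma tile (g : ℝ → ℝ≥0∞) (T : ℝ≥0∞) (hT : ∀ x, ∫⁻ y in Ioc x (x+1), g y ≤ T) (a : ℝ) (N : ℕ) :
    ∫⁻ y in Ioc a (a + N), g y ≤ N * T := by
  induction N with
  | zero => simp
  | succ n ih =>
    have : Ioc a (a + (n+1 : ℕ)) = Ioc a (a + n) ∪ Ioc (a+n) (a + n + 1) := by
      rw [Ioc_union_Ioc_eq_Ioc (by simp) (by simp)]; push_cast; rw [add_assoc]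
    rw [this]
    refine (lintegral_union_le _ _ _).trans ?_
    push_cast
    rw [add_mul, one_mul]
    exact add_le_add ih (hT _)

lemma loc (g : ℝ → ℝ≥0∞) (T : ℝ≥0∞) (hT : ∀ x, ∫⁻ y in Ioc x (x+1), g y ≤ T) (x s : ℝ)
    (hs : s ∈ Ioc x (x+1)) :
    MM g s ≤ MM ((Icc (x-1) (x+2)).indicator g) s + T := by
  refine MM_le _ _ _ fun m => ?_
  rw [mul_add]
  rcases le_total m 0 with hm | hm
  · refine le_trans ?_ le_self_add
    refine le_trans (le_of_eq ?_) (avg_le _ _ _)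
    refine setLIntegral_congr_fun measurableSet_closedBall fun y hy => ?_
    have h1 : (2:ℝ)^m ≤ 1 := zpow_le_one_of_nonpos₀ (by norm_num) hm
    rw [Real.closedBall_eq_Icc] at hy
    rw [indicator_of_mem]
    exact ⟨by linarith [hy.1, hs.1], by linarith [hy.2, hs.2]⟩
  · refine le_trans ?_ le_add_self
    obtain ⟨n, rfl⟩ := Int.eq_ofNat_of_zero_le hm
    rw [Real.closedBall_eq_Icc, setLIntegral_congr (Ioc_ae_eq_Icc (a := s - (2:ℝ)^(n:ℤ))).symm]
    have := tile g T hT (s - (2:ℝ)^(n:ℤ)) (2 * 2^n)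
    have e : s - (2:ℝ)^(n:ℤ) + ((2 * 2^n : ℕ) : ℝ) = s + (2:ℝ)^(n:ℤ) := by
      push_cast; rw [zpow_natCast]; ring
    rw [e] at this
    refine this.trans (le_of_eq ?_)
    congr 1
    rw [← ENNReal.ofReal_natCast]; push_cast; rw [zpow_natCast]

lemma jensen (p : ℝ) (hp : 1 < p) (g : ℝ → ℝ≥0∞) (hg : Measurable g) (x : ℝ) :
    ∫⁻ y in Ioc x (x+1), g y ≤ (∫⁻ y in Ioc x (x+1), g y ^ p) ^ (1/p) := by
  have := ENNReal.lintegral_mul_le_Lp_mul_Lq (volume.restrict (Ioc x (x+1)))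
    (Real.HolderConjugate.conjExponent hp) hg.aemeasurable (aemeasurable_const (b := (1:ℝ≥0∞)))
  simpa using this

theorem stmt_12 (p : ℝ) (hp : 1 < p) (φ : SchwartzMap ℝ ℂ) :
    ∃ C : ℝ, 0 < C ∧ ∀ f : ℝ → ℂ, Measurable f → stepanov p f < ⊤ →
      (⨆ x : ℝ, ∫⁻ s in Set.Ioc x (x + 1),
          (⨆ k : ℕ,
            (‖∫ y : ℝ, f (s - y) * (((2 : ℝ) ^ (k + 1) : ℝ) : ℂ)
                * φ ((2 : ℝ) ^ (k + 1) * y)‖₊ : ENNReal)) ^ p) ^ (1 / p)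
        ≤ ENNReal.ofReal C * stepanov p f := by
  have hp0 : 0 < p := by linarith
  have hp1 : 0 < p - 1 := by linarith
  obtain ⟨D, hD, hconv⟩ := conv_bound φ
  set K : ℝ := 10 * p * 2 ^ (p-1) / (p-1) with hK
  have hKpos : 0 < K := by positivity
  set Q : ℝ := D ^ p * 2 ^ (p-1) * (3 * K + 1) with hQ
  have hQpos : 0 < Q := by positivity
  refine ⟨Q ^ (1/p), by positivity, fun f hf _ => ?_⟩
  unfold stepanov
  rw [← ENNReal.ofReal_rpow_of_pos hQpos, ← ENNReal.mul_rpow_of_nonneg _ _ (by positivity)]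
  refine ENNReal.rpow_le_rpow (iSup_le fun x => ?_) (by positivity)
  set S : ℝ≥0∞ := ⨆ x : ℝ, ∫⁻ s in Set.Ioc x (x + 1), (‖f s‖₊ : ENNReal) ^ p with hS
  set g : ℝ → ℝ≥0∞ := fun x => ‖f x‖ₑ with hg
  have hgm : Measurable g := hf.enorm
  have hSx : ∀ x, ∫⁻ y in Ioc x (x+1), g y ^ p ≤ S := fun x =>
    le_iSup (fun x : ℝ => ∫⁻ s in Set.Ioc x (x + 1), (‖f s‖₊ : ENNReal) ^ p) x
  have hT : ∀ x, ∫⁻ y in Ioc x (x+1), g y ≤ S ^ (1/p) := fun x =>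
    (jensen p hp g hgm x).trans (ENNReal.rpow_le_rpow (hSx x) (by positivity))
  set gx := (Icc (x-1) (x+2)).indicator g with hgx
  have hgxm : Measurable gx := hgm.indicator measurableSet_Icc
  have hgxp : ∫⁻ y, gx y ^ p ≤ 3 * S := by
    have e : ∀ y, gx y ^ p = (Icc (x-1) (x+2)).indicator (fun y => g y ^ p) y := by
      intro y
      simp only [hgx, indicator_apply]
      split_ifs
      · rfl
      · exact ENNReal.zero_rpow_of_pos hp0
    simp only [e]
    rw [lintegral_indicator measurableSet_Icc, setLIntegral_congr (Ioc_ae_eq_Icc (a := x-1)).symm]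
    have := tile (fun y => g y ^ p) S hSx (x-1) 3
    rw [show x - 1 + ((3:ℕ):ℝ) = x + 2 by push_cast; ring] at this
    simpa using this
  calc _ ≤ ∫⁻ s in Ioc x (x+1), ENNReal.ofReal (D ^ p * 2 ^ (p-1)) * (MM gx s ^ p + S) := by
        refine setLIntegral_mono' measurableSet_Ioc fun s hs => ?_
        have h1 := (iSup_le (hconv f hf s)).trans (mul_le_mul_right (loc g _ hT x s hs) _)
        refine (ENNReal.rpow_le_rpow h1 hp0.le).trans ?_
        rw [ENNReal.mul_rpow_of_nonneg _ _ hp0.le, ENNReal.ofReal_mul (by positivity), mul_assoc,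
          ENNReal.ofReal_rpow_of_pos hD]
        refine mul_le_mul_right ((ENNReal.rpow_add_le_mul_rpow_add_rpow _ _ hp.le).trans (le_of_eq ?_)) _
        rw [← ENNReal.rpow_mul, one_div_mul_cancel hp0.ne', ENNReal.rpow_one,
          ← ENNReal.ofReal_rpow_of_pos (by norm_num), ENNReal.ofReal_ofNat]
    _ = ENNReal.ofReal (D ^ p * 2 ^ (p-1)) * ((∫⁻ s in Ioc x (x+1), MM gx s ^ p) + S) := by
        rw [lintegral_const_mul' _ _ ENNReal.ofReal_ne_top, lintegral_add_right _ measurable_const,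
          setLIntegral_const]
        simp
    _ ≤ ENNReal.ofReal (D ^ p * 2 ^ (p-1)) * (ENNReal.ofReal K * (3 * S) + S) := by
        refine mul_le_mul_right (add_le_add_left ?_ _) _
        exact (setLIntegral_le_lintegral _ _).trans
          ((strong p hp gx hgxm).trans (mul_le_mul_right hgxp _))
    _ = ENNReal.ofReal Q * S := by
        rw [hQ, ENNReal.ofReal_mul (by positivity : 0 ≤ D ^ p * 2 ^ (p-1)), ENNReal.ofReal_add (by positivity) zero_le_one,
          ENNReal.ofReal_mul (by norm_num : (0:ℝ) ≤ 3), ENNReal.ofReal_one, ENNReal.ofReal_ofNat]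
        ring
end
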